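/- arXiv:2310.15121 — 6 statements merged into one kernel-verified Lean document; each statement's English description precedes it below -/
import Mathlib

section
/- The subgroup of rational points is dense in the real symplectic group: for every k ≥ 1, the set of elements of Sp(2k,ℝ) all of whose matrix entries are rational (i.e., lie in the range of the coercion ℚ → ℝ) is a dense subset of Sp(2k,ℝ). -/
/-!
Over any field, `Sp` is generated by `J` and the shears `(1 X; 0 1)` with `X` symmetric. Symmetric
matrices over a dense subring are dense among all symmetric matrices, so the closure of the group
of points over that subring contains these generators, hence all of `Sp`.

For the generation, a suitable shear makes the upper left block of a symplectic matrix invertible;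
block elimination then leaves a matrix `(A 0; 0 A⁻ᵀ)`. For symmetric `A` it is the word
`(1 A; 0 1) (1 0; -A⁻¹ 1) (1 A; 0 1) J`, and the symmetric invertible matrices generate `GL`.
-/

open Matrix

namespace SymplecticDensity

section Symmetric

variable {m n K : Type*} [Fintype m] [Fintype n] [Field K]

-- `C x` is orthogonal to the range of `A`, so `v` lies outside that range: adding a multiple of `v`
-- to `A w` cannot produce a new zero, and it makes `A x` nonzero.
theorem ker_add_vecMulVec_mul_lt {A C : Matrix m n K} (hAC : Aᵀ * C = Cᵀ * A)
    {x : n → K} (hx : A *ᵥ x = 0) {v : m → K} (hv : v ⬝ᵥ C *ᵥ x ≠ 0) :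
    (A + vecMulVec v v * C).mulVecLin.ker < A.mulVecLin.ker := by
  have apply_eq (w : n → K) :
      (A + vecMulVec v v * C) *ᵥ w = A *ᵥ w + (v ⬝ᵥ C *ᵥ w) • v := by
    rw [add_mulVec, ← mulVec_mulVec, vecMulVec_mulVec, op_smul_eq_smul]
  have range_orthogonal (w : n → K) : A *ᵥ w ⬝ᵥ C *ᵥ x = 0 := by
    rw [← vecMul_transpose, ← dotProduct_mulVec, mulVec_mulVec, hAC, ← mulVec_mulVec, hx,
      mulVec_zero, dotProduct_zero]
  refine SetLike.lt_iff_le_and_exists.2 ⟨fun w hw ↦ ?_, x, hx, fun hx' ↦ ?_⟩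
  · have hw' : A *ᵥ w + (v ⬝ᵥ C *ᵥ w) • v = 0 := apply_eq w ▸ hw
    have hvw : v ⬝ᵥ C *ᵥ w = 0 := by
      simpa [range_orthogonal, hv] using congr($hw' ⬝ᵥ C *ᵥ x)
    simpa [hvw] using hw'
  · have hvx : (v ⬝ᵥ C *ᵥ x) • v = 0 := by
      simpa [hx] using (apply_eq x).symm.trans hx'
    simp [(smul_eq_zero.1 hvx).resolve_left hv] at hv

theorem exists_isSymm_injective_add_mul {A C : Matrix m n K} (hAC : Aᵀ * C = Cᵀ * A)
    (hker : ∀ x, A *ᵥ x = 0 → C *ᵥ x = 0 → x = 0) :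
    ∃ X : Matrix m m K, X.IsSymm ∧ Function.Injective (A + X * C).mulVec := by
  classical
  induction hN : A.mulVecLin.ker using WellFoundedLT.induction generalizing A with | _ N ih
  by_cases hA : ∀ x, A *ᵥ x = 0 → x = 0
  · refine ⟨0, isSymm_zero, ?_⟩
    rw [Matrix.zero_mul, add_zero]
    exact (injective_iff_map_eq_zero A.mulVecLin).2 hA
  push Not at hA
  obtain ⟨x, hAx, hx⟩ := hA
  obtain ⟨i, hi⟩ := Function.ne_iff.1 (mt (hker x hAx) hx)
  set E : Matrix m m K := vecMulVec (Pi.single i 1) (Pi.single i 1)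
  have hE_symm : E.IsSymm := transpose_vecMulVec ..
  have hlt : (A + E * C).mulVecLin.ker < N :=
    hN ▸ ker_add_vecMulVec_mul_lt hAC hAx (by simpa using hi)
  have hEAC : (A + E * C)ᵀ * C = Cᵀ * (A + E * C) := by
    rw [transpose_add, transpose_mul, hE_symm.eq, Matrix.add_mul, hAC, Matrix.mul_add,
      Matrix.mul_assoc]
  obtain ⟨X, hX, hinj⟩ := ih _ hlt hEAC (fun w hw hCw ↦ hker w (by
    simpa [add_mulVec, ← mulVec_mulVec, hCw] using hw) hCw) rfl
  exact ⟨E + X, hE_symm.add hX, by rwa [Matrix.add_mul, ← add_assoc]⟩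

end Symmetric

section Generation

variable {n R K : Type*} [Fintype n] [DecidableEq n]

theorem isSymm_transvection_mul_swap [CommRing R] (i j : n) (c : R) :
    (transvection i j c * swap R i j).IsSymm := by
  have single_mul_swap : single i j c * swap R i j = single i i c := by
    ext a b
    simp only [swap, PEquiv.mul_toMatrix_toPEquiv, submatrix_apply, single_apply,
      Equiv.symm_swap, Equiv.swap_apply_def, id]
    grind
  rw [transvection, Matrix.add_mul, Matrix.one_mul, single_mul_swap]
  exact (isSymm_swap i j).add (transpose_single ..)

theorem isSymm_induction_of_det_ne_zero [Field K] {P : Matrix n n K → Prop}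
    (hsymm : ∀ A, A.IsSymm → A.det ≠ 0 → P A)
    (hmul : ∀ A B, A.det ≠ 0 → B.det ≠ 0 → P A → P B → P (A * B))
    (A : Matrix n n K) (hA : A.det ≠ 0) : P A := by
  refine diagonal_transvection_induction_of_det_ne_zero P A hA
    (fun D hD ↦ hsymm _ (isSymm_diagonal D) hD) (fun ⟨i, j, hij, c⟩ ↦ ?_) hmul
  have hswap : (swap K i j).det ≠ 0 := by simp [swap, hij]
  have hprod : (transvection i j c * swap K i j).det ≠ 0 := by
    simpa [det_transvection_of_ne i j hij c] using hswap
  have hfactor : transvection i j c = transvection i j c * swap K i j * swap K i j := by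
    rw [Matrix.mul_assoc, swap_mul_self, Matrix.mul_one]
  rw [TransvectionStruct.toMatrix_mk, hfactor]
  exact hmul _ _ hprod hswap (hsymm _ (isSymm_transvection_mul_swap i j c) hprod)
    (hsymm _ (isSymm_swap i j) hswap)

end Generation

section Shear

variable (l R : Type*) [Fintype l] [DecidableEq l] [CommRing R]

/-- The submonoid of matrices generated by `J` and the upper symplectic shears `(1 X; 0 1)` with
`X` symmetric. It contains the inverses of its generators, as `J⁻¹ = J ^ 3` and the inverse of a
shear is a shear. -/
def shearMonoid : Submonoid (Matrix (l ⊕ l) (l ⊕ l) R) :=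
  .closure (insert (J l R) {M | ∃ X : Matrix l l R, X.IsSymm ∧ M = fromBlocks 1 X 0 1})

variable {l R}

theorem upperShear_mem_symplecticGroup {X : Matrix l l R} (hX : X.IsSymm) :
    fromBlocks 1 X 0 1 ∈ symplecticGroup l R := by
  simp [SymplecticGroup.fromBlocks_mem_iff, hX.eq]

theorem shearMonoid_le_symplecticGroup : shearMonoid l R ≤ symplecticGroup l R := by
  rw [shearMonoid, Submonoid.closure_le]
  rintro _ (rfl | ⟨X, hX, rfl⟩)
  exacts [SymplecticGroup.J_mem l R, upperShear_mem_symplecticGroup hX]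

theorem J_mem_shearMonoid : J l R ∈ shearMonoid l R :=
  Submonoid.subset_closure (.inl rfl)

theorem upperShear_mem_shearMonoid {X : Matrix l l R} (hX : X.IsSymm) :
    fromBlocks 1 X 0 1 ∈ shearMonoid l R :=
  Submonoid.subset_closure (.inr ⟨X, hX, rfl⟩)

theorem lowerShear_mem_shearMonoid {X : Matrix l l R} (hX : X.IsSymm) :
    fromBlocks 1 0 X 1 ∈ shearMonoid l R := by
  have conj_J : J l R * fromBlocks 1 (-X) 0 1 * J l R ^ 3 = fromBlocks 1 0 X 1 := by
    simp [pow_succ, J, fromBlocks_multiply]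
  rw [← conj_J]
  exact mul_mem (mul_mem J_mem_shearMonoid (upperShear_mem_shearMonoid hX.neg))
    (pow_mem J_mem_shearMonoid 3)

theorem fromBlocks_symm_inv_mem_shearMonoid {A : Matrix l l R} (hA : A.IsSymm)
    (hdet : IsUnit A.det) : fromBlocks A 0 0 A⁻¹ ∈ shearMonoid l R := by
  have hA_inv : (A⁻¹).IsSymm := by
    rw [Matrix.IsSymm, transpose_nonsing_inv, hA.eq]
  have factor : fromBlocks 1 A 0 1 * fromBlocks 1 0 (-A⁻¹) 1 * fromBlocks 1 A 0 1 * J l R =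
      fromBlocks A 0 0 A⁻¹ := by
    simp [J, fromBlocks_multiply, mul_nonsing_inv _ hdet, nonsing_inv_mul _ hdet]
  rw [← factor]
  exact mul_mem (mul_mem (mul_mem (upperShear_mem_shearMonoid hA)
    (lowerShear_mem_shearMonoid hA_inv.neg)) (upperShear_mem_shearMonoid hA)) J_mem_shearMonoid

end Shear

section Field

variable {l K : Type*} [Fintype l] [DecidableEq l] [Field K] {A B C D : Matrix l l K}

theorem fromBlocks_inv_transpose_mem_shearMonoid (hA : A.det ≠ 0) :
    fromBlocks A 0 0 A⁻¹ᵀ ∈ shearMonoid l K := by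
  refine isSymm_induction_of_det_ne_zero (P := fun A ↦ fromBlocks A 0 0 A⁻¹ᵀ ∈ shearMonoid l K)
    (fun A hA hdet ↦ ?_) (fun A B _ _ hA hB ↦ ?_) A hA
  · rw [transpose_nonsing_inv, hA.eq]
    exact fromBlocks_symm_inv_mem_shearMonoid hA hdet.isUnit
  · simpa [fromBlocks_multiply, Matrix.mul_inv_rev] using mul_mem hA hB

theorem mem_shearMonoid_of_lower_left_eq_zero
    (h : fromBlocks A B 0 D ∈ symplecticGroup l K) : fromBlocks A B 0 D ∈ shearMonoid l K := by
  obtain ⟨-, hBD, hAD⟩ := SymplecticGroup.fromBlocks_mem_iff.1 h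
  have hDA : Dᵀ * A = 1 := by simpa using congr($hADᵀ)
  have hA_inv : A⁻¹ = Dᵀ := inv_eq_left_inv hDA
  have factor : fromBlocks A 0 0 A⁻¹ᵀ * fromBlocks 1 (Dᵀ * B) 0 1 = fromBlocks A B 0 D := by
    simp [fromBlocks_multiply, hA_inv, ← Matrix.mul_assoc, mul_eq_one_comm.1 hDA]
  rw [← factor]
  refine mul_mem (fromBlocks_inv_transpose_mem_shearMonoid (det_ne_zero_of_left_inverse hDA))
    (upperShear_mem_shearMonoid ?_)
  simp [Matrix.IsSymm, hBD]

theorem mem_shearMonoid_of_isUnit_upper_left (h : fromBlocks A B C D ∈ symplecticGroup l K)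
    (hA : IsUnit A) : fromBlocks A B C D ∈ shearMonoid l K := by
  have hdet := (isUnit_iff_isUnit_det A).1 hA
  have hS : (C * A⁻¹).IsSymm := by
    have hAC : C * A⁻¹ = A⁻¹ᵀ * (Aᵀ * C) * A⁻¹ := by
      rw [← Matrix.mul_assoc, ← transpose_mul, mul_nonsing_inv _ hdet, transpose_one,
        Matrix.one_mul]
    rw [hAC]
    simp only [Matrix.IsSymm, transpose_mul, transpose_transpose, Matrix.mul_assoc,
      (SymplecticGroup.fromBlocks_mem_iff.1 h).1]
  have eliminate : fromBlocks 1 0 (-(C * A⁻¹)) 1 * fromBlocks A B C D =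
      fromBlocks A B 0 (D - C * A⁻¹ * B) := by
    simp [fromBlocks_multiply, nonsing_inv_mul_cancel_right _ _ hdet, neg_add_eq_sub]
  have restore : fromBlocks A B C D =
      fromBlocks 1 0 (C * A⁻¹) 1 * fromBlocks A B 0 (D - C * A⁻¹ * B) := by
    simp [fromBlocks_multiply, nonsing_inv_mul_cancel_right _ _ hdet]
  rw [restore]
  refine mul_mem (lowerShear_mem_shearMonoid hS) (mem_shearMonoid_of_lower_left_eq_zero ?_)
  rw [← eliminate]
  exact mul_mem (shearMonoid_le_symplecticGroup (lowerShear_mem_shearMonoid hS.neg)) h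

theorem exists_isSymm_isUnit_add_mul (h : fromBlocks A B C D ∈ symplecticGroup l K) :
    ∃ X : Matrix l l K, X.IsSymm ∧ IsUnit (A + X * C) := by
  obtain ⟨hAC, -, hAD⟩ := SymplecticGroup.fromBlocks_mem_iff.1 h
  obtain ⟨X, hX, hinj⟩ := exists_isSymm_injective_add_mul hAC fun x hAx hCx ↦ by
    have hDA : Dᵀ * A - Bᵀ * C = 1 := by simpa using congr($hADᵀ)
    simpa [sub_mulVec, ← mulVec_mulVec, hAx, hCx] using congr($hDA *ᵥ x).symm
  exact ⟨X, hX, mulVec_injective_iff_isUnit.1 hinj⟩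

theorem shearMonoid_eq_symplecticGroup : shearMonoid l K = symplecticGroup l K := by
  refine le_antisymm shearMonoid_le_symplecticGroup fun M hM ↦ ?_
  obtain ⟨A, B, C, D, rfl⟩ : ∃ A B C D, M = fromBlocks A B C D :=
    ⟨_, _, _, _, M.fromBlocks_toBlocks.symm⟩
  obtain ⟨X, hX, hunit⟩ := exists_isSymm_isUnit_add_mul hM
  have shear_mul : fromBlocks 1 X 0 1 * fromBlocks A B C D =
      fromBlocks (A + X * C) (B + X * D) C D := by
    simp [fromBlocks_multiply]
  have unshear : fromBlocks A B C D =
      fromBlocks 1 (-X) 0 1 * fromBlocks (A + X * C) (B + X * D) C D := by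
    simp [fromBlocks_multiply]
  rw [unshear]
  refine mul_mem (upperShear_mem_shearMonoid hX.neg)
    (mem_shearMonoid_of_isUnit_upper_left ?_ hunit)
  rw [← shear_mul]
  exact mul_mem (upperShear_mem_symplecticGroup hX) hM

end Field

section Density

variable {l R : Type*}

theorem fromBlocks_mem_matrix {S : Set R} {A B C D : Matrix l l R} (hA : A ∈ S.matrix)
    (hB : B ∈ S.matrix) (hC : C ∈ S.matrix) (hD : D ∈ S.matrix) :
    fromBlocks A B C D ∈ S.matrix := by
  rintro (i | i) (j | j)
  exacts [hA i j, hB i j, hC i j, hD i j]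

variable [TopologicalSpace R]

theorem mem_closure_isSymm_inter_matrix {S : Set R} (hS : Dense S) {X : Matrix l l R}
    (hX : X.IsSymm) : X ∈ closure ({Y | Y.IsSymm} ∩ S.matrix) := by
  let ofSym2 (x : Sym2 l → R) : Matrix l l R := .of fun i j ↦ x s(i, j)
  have ofSym2_continuous : Continuous ofSym2 :=
    continuous_matrix fun i j ↦ continuous_apply s(i, j)
  let x : Sym2 l → R := Sym2.lift ⟨X, fun i j ↦ hX.apply j i⟩
  have hx : x ∈ closure (Set.univ.pi fun _ ↦ S) := dense_pi Set.univ (fun _ _ ↦ hS) x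
  refine map_mem_closure ofSym2_continuous hx fun y hy ↦ ⟨?_, fun i j ↦ hy _ trivial⟩
  exact .ext fun i j ↦ congrArg y Sym2.eq_swap

theorem shearMonoid_le_topologicalClosure [Fintype l] [DecidableEq l] [CommRing R]
    [IsTopologicalRing R] {S : Subring R} (hS : Dense (S : Set R)) :
    shearMonoid l R ≤ (S.matrix.toSubmonoid ⊓ symplecticGroup l R).topologicalClosure := by
  have zero_mem : (0 : Matrix l l R) ∈ S.matrix := zero_mem _
  have one_mem : (1 : Matrix l l R) ∈ S.matrix := one_mem _
  rw [shearMonoid, Submonoid.closure_le]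
  rintro _ (rfl | ⟨X, hX, rfl⟩)
  · exact subset_closure
      ⟨fromBlocks_mem_matrix zero_mem (neg_mem one_mem) one_mem zero_mem,
        SymplecticGroup.J_mem l R⟩
  · let shear (Y : Matrix l l R) : Matrix (l ⊕ l) (l ⊕ l) R := fromBlocks 1 Y 0 1
    have shear_continuous : Continuous shear := by fun_prop
    exact map_mem_closure (f := shear) shear_continuous (mem_closure_isSymm_inter_matrix hS hX)
      fun Y ⟨hY, hYS⟩ ↦ ⟨fromBlocks_mem_matrix one_mem hYS zero_mem one_mem,
        upperShear_mem_symplecticGroup hY⟩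

end Density

end SymplecticDensity

theorem rational_points_dense_in_Sp_general {l K : Type*} [Fintype l] [DecidableEq l] [Field K]
    [TopologicalSpace K] [IsTopologicalRing K] (S : Subring K) (hS : Dense (S : Set K)) :
    Dense {M : symplecticGroup l K | ∀ i j, (M : Matrix (l ⊕ l) (l ⊕ l) K) i j ∈ S} := by
  rw [Subtype.dense_iff]
  intro M hM
  rw [SetLike.mem_coe, ← SymplecticDensity.shearMonoid_eq_symplecticGroup] at hM
  refine closure_mono ?_ (SymplecticDensity.shearMonoid_le_topologicalClosure hS hM)
  rintro N ⟨hNS, hN⟩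
  exact ⟨⟨N, hN⟩, hNS, rfl⟩

/-- The set of elements of `Sp(2k,ℝ)` with all entries rational is dense in `Sp(2k,ℝ)`
(with the subspace topology from the space of `2k × 2k` real matrices). -/
theorem rational_points_dense_in_Sp (k : ℕ) (hk : 1 ≤ k) :
    Dense {M : Matrix.symplecticGroup (Fin k) ℝ |
      ∀ i j, (M : Matrix (Fin k ⊕ Fin k) (Fin k ⊕ Fin k) ℝ) i j ∈
        Set.range ((↑) : ℚ → ℝ)} :=
  rational_points_dense_in_Sp_general (Rat.castHom ℝ).range Rat.denseRange_cast
end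

section
/- Rational points are dense in the real centralizer of a regular rational matrix: let A ∈ SL(n,ℚ) be such that the characteristic polynomial of A has n distinct roots in ℂ, and let A' denote the image of A in SL(n,ℝ) under the entrywise coercion. Then the set {B ∈ SL(n,ℝ) : B commutes with A' and all entries of B are rational} is dense in the centralizer {B ∈ SL(n,ℝ) : B commutes with A'}. -/
/-- `SL(n,R)` carries the subspace topology induced from the space of matrices. -/
instance specialLinearGroupTopology (n : Type*) [DecidableEq n] [Fintype n]
    (R : Type*) [CommRing R] [TopologicalSpace R] :
    TopologicalSpace (Matrix.SpecialLinearGroup n R) :=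
  TopologicalSpace.induced ((↑) : Matrix.SpecialLinearGroup n R → Matrix n n R) inferInstance

/-!
Diagonalize `A` over `ℂ` with eigenvalue vector `α`. In eigenvalue coordinates the matrices over a
subfield `K` of `ℝ` commuting with `A` form the algebra `K[α] ⊆ ℂⁿ`, and the determinant is the
product of the coordinates. Since `K[α]` is dense in `ℝ[α]`, only the condition of norm one is an
obstacle. For `u, v ∈ K[α]` the vector with entries `(∏ l, (1 - u k * v l)) / ∏ l, (1 - v k * u l)`
lies in `K[α]`, because each product is a value of a characteristic polynomial over `K`, and it has
norm one by the symmetry of the double product. At `u = 1 - w` and `v` the indicator of an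
`m`-element set, with `w` and `v` in `ℝ[α]` and `w` of norm one, it equals `w ^ m`, so `w ^ m` is a
limit of points of norm one of `K[α]`. If some eigenvalue is real, then the indicator of its index
lies in `ℝ[α]` and `m = 1` suffices. Otherwise take `v = 1` and `m = n`: coordinates come in complex
conjugate pairs, so every element of norm one in `ℝ[α]` is an `n`-th power of another.
-/

open Polynomial Matrix Topology
open scoped ComplexConjugate

section Diagonalization

lemma map_algebraMap_map_algebraMap {m n R S T : Type*} [CommSemiring R] [CommSemiring S]
    [Semiring T] [Algebra R S] [Algebra S T] [Algebra R T] [IsScalarTower R S T]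
    (A : Matrix m n R) :
    (A.map (algebraMap R S)).map (algebraMap S T) = A.map (algebraMap R T) := by
  ext i j
  exact (IsScalarTower.algebraMap_apply R S T (A i j)).symm

variable {n R S L : Type*} [Fintype n] [DecidableEq n] [CommRing R] [CommRing S] [Algebra R S]
  [Field L]

/-- The algebra homomorphism `t ↦ P * diagonal t * P⁻¹` from coordinate vectors to matrices. A
diagonalization of `M` with eigenvalues `α` is recorded as `M = conjDiagonal P α`. -/
def conjDiagonal (P : (Matrix n n S)ˣ) : (n → S) →ₐ[S] Matrix n n S :=
  (MulSemiringAction.toAlgHom S (Matrix n n S) (ConjAct.toConjAct P)).comp (diagonalAlgHom S)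

lemma conjDiagonal_apply (P : (Matrix n n S)ˣ) (t : n → S) :
    conjDiagonal P t = (P : Matrix n n S) * diagonal t * ((P⁻¹ : (Matrix n n S)ˣ) : Matrix n n S) :=
  rfl

lemma det_conjDiagonal (P : (Matrix n n S)ˣ) (t : n → S) : (conjDiagonal P t).det = ∏ k, t k := by
  rw [conjDiagonal_apply, det_units_conj, det_diagonal]

lemma conjDiagonal_injective (P : (Matrix n n S)ˣ) : Function.Injective (conjDiagonal P) :=
  (MulAction.injective (ConjAct.toConjAct P)).comp diagonal_injective

lemma charpoly_conjDiagonal (P : (Matrix n n S)ˣ) (t : n → S) :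
    (conjDiagonal P t).charpoly = ∏ k, (X - C (t k)) := by
  rw [conjDiagonal_apply, coe_units_inv, charpoly_units_conj, charpoly_diagonal]

lemma exists_eq_conjDiagonal_of_card_roots [DecidableEq L] (M : Matrix n n L)
    (hM : M.charpoly.roots.toFinset.card = Fintype.card n) :
    ∃ (P : (Matrix n n L)ˣ) (α : n → L), Function.Injective α ∧ M = conjDiagonal P α := by
  let e : n ≃ M.charpoly.roots.toFinset := Fintype.equivOfCardEq (by rw [Fintype.card_coe, hM])
  let α : n → L := fun k => e k
  have hα : Function.Injective α := Subtype.val_injective.comp e.injective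
  have exists_eigenvector (k : n) : ∃ v, Module.End.HasEigenvector (toLin' M) (α k) v := by
    have hroot : M.charpoly.IsRoot (α k) := isRoot_of_mem_roots (Multiset.mem_toFinset.1 (e k).2)
    refine Module.End.HasEigenvalue.exists_hasEigenvector ?_
    rwa [Module.End.hasEigenvalue_iff_isRoot_charpoly, charpoly_toLin']
  choose v hv using exists_eigenvector
  obtain ⟨P, hP⟩ : IsUnit (of v)ᵀ :=
    linearIndependent_cols_iff_isUnit.1 (Module.End.eigenvectors_linearIndependent' _ α hα v hv)
  refine ⟨P, α, hα, ?_⟩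
  rw [conjDiagonal_apply, Units.eq_mul_inv_iff_mul_eq, hP]
  ext i j
  rw [mul_diagonal, mul_comm]
  exact congrFun (hv j).apply_eq_smul i

lemma exists_eq_conjDiagonal_of_commute [IsDomain S] {P : (Matrix n n S)ˣ} {α : n → S}
    (hα : Function.Injective α) {M : Matrix n n S} (hM : Commute M (conjDiagonal P α)) :
    ∃ t, M = conjDiagonal P t := by
  let E : Matrix n n S := ((P⁻¹ : (Matrix n n S)ˣ) : Matrix n n S) * M * P
  have hE : E * diagonal α = diagonal α * E := by
    have := congrArg (fun N => ((P⁻¹ : (Matrix n n S)ˣ) : Matrix n n S) * N * P) hM.eq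
    simpa [E, conjDiagonal_apply, mul_assoc] using this
  have hdiag : E = diagonal E.diag := by
    ext i j
    obtain rfl | hij := eq_or_ne i j
    · simp
    rw [diagonal_apply_ne _ hij]
    have hentry := congrFun₂ hE i j
    rw [mul_diagonal, diagonal_mul, mul_comm, ← sub_eq_zero, ← sub_mul] at hentry
    exact (mul_eq_zero.1 hentry).resolve_left (sub_ne_zero.2 (hα.ne hij.symm))
  refine ⟨E.diag, ?_⟩
  rw [conjDiagonal_apply, ← hdiag]
  simp [E, mul_assoc]

lemma map_aeval_eq_conjDiagonal {A : Matrix n n R} {P : (Matrix n n S)ˣ} {α : n → S}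
    (hA : A.map (algebraMap R S) = conjDiagonal P α) (q : R[X]) :
    (aeval A q).map (algebraMap R S) = conjDiagonal P (aeval α q) := by
  have hmap := aeval_algHom_apply (Algebra.ofId R S).mapMatrix A q
  have hconj := aeval_algHom_apply ((conjDiagonal P).restrictScalars R) α q
  calc (aeval A q).map (algebraMap R S) = aeval (A.map (algebraMap R S)) q := hmap.symm
    _ = aeval (conjDiagonal P α) q := by rw [hA]
    _ = conjDiagonal P (aeval α q) := hconj

end Diagonalization

section Evaluation

variable {ι K L : Type*} [Field K] [Field L] [Algebra K L]

lemma exists_aeval_eq_of_injective [Finite ι] {α : ι → L} (hα : Function.Injective α) (u : ι → L) :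
    ∃ q : L[X], aeval α q = u := by
  classical
  have := Fintype.ofFinite ι
  refine ⟨Lagrange.interpolate Finset.univ α u, funext fun k => ?_⟩
  rw [aeval_pi_apply₂, coe_aeval_eq_eval]
  exact Lagrange.eval_interpolate_at_node u hα.injOn (Finset.mem_univ k)

lemma inv_mem_of_forall_isIntegral {S : Subalgebra K (ι → L)} {x : ι → L} (hx : x ∈ S)
    (hint : IsIntegral K x) (hne : ∀ k, x k ≠ 0) : x⁻¹ ∈ S := by
  have hxinv : x * x⁻¹ = 1 := funext fun k => mul_inv_cancel₀ (hne k)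
  have hint_sub : IsIntegral K (⟨x, hx⟩ : S) :=
    (isIntegral_algHom_iff S.val Subtype.val_injective).1 hint
  have hreg : (⟨x, hx⟩ : S) ∈ nonZeroDivisors S := by
    refine mem_nonZeroDivisors_iff_right.2 fun y hy => Subtype.ext (funext fun k => ?_)
    exact (mul_eq_zero.1 (congrFun (congrArg Subtype.val hy) k)).resolve_right (hne k)
  obtain ⟨y, hy⟩ :=
    (IsArtinianRing.isUnit_of_isIntegral_of_nonZeroDivisor hint_sub hreg).exists_right_inv
  have hxy : x * (y : ι → L) = 1 := congrArg Subtype.val hy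
  have : (y : ι → L) = x⁻¹ := by
    calc (y : ι → L) = x⁻¹ * (x * y) := by rw [← mul_assoc, mul_comm x⁻¹, hxinv, one_mul]
      _ = x⁻¹ := by rw [hxy, mul_one]
  exact this ▸ y.2

end Evaluation

section CauchyRowProd

/-- The row products of the array `1 - u k * v l`, as in Cauchy's identity. The `k`-th entry is the
reverse characteristic polynomial of a matrix with eigenvalues `v`, evaluated at `u k`. -/
def cauchyRowProd {n R : Type*} [Fintype n] [CommRing R] (u v : n → R) : n → R :=
  fun k => ∏ l, (1 - u k * v l)

/-- The elements of norm one of a subalgebra of `L ^ n`, the norm being the product of the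
coordinates. -/
def normOne {n K L : Type*} [Fintype n] [CommSemiring K] [CommSemiring L] [Algebra K L]
    (S : Subalgebra K (n → L)) : Set (n → L) :=
  {x | x ∈ S ∧ ∏ k, x k = 1}

lemma prod_cauchyRowProd_comm {n R : Type*} [Fintype n] [CommRing R] (u v : n → R) :
    ∏ k, cauchyRowProd u v k = ∏ k, cauchyRowProd v u k := by
  simp only [cauchyRowProd]
  rw [Finset.prod_comm]
  simp only [mul_comm]

lemma cauchyRowProd_one_sub_indicator {n R : Type*} [Fintype n] [CommRing R] (w : n → R)
    (s : Finset n) : cauchyRowProd (1 - w) (Set.indicator s 1) = w ^ s.card := by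
  classical
  funext k
  simp [cauchyRowProd, Set.indicator_apply, apply_ite]

lemma cauchyRowProd_indicator_one_sub {n R : Type*} [Fintype n] [CommRing R] {w : n → R}
    (hw : ∏ k, w k = 1) (s : Finset n) : cauchyRowProd (Set.indicator s 1) (1 - w) = 1 := by
  funext k
  by_cases hk : k ∈ s <;> simp [cauchyRowProd, hk, hw]

lemma continuous_cauchyRowProd {n R : Type*} [Fintype n] [CommRing R] [TopologicalSpace R]
    [IsTopologicalRing R] : Continuous fun x : (n → R) × (n → R) => cauchyRowProd x.1 x.2 := by
  unfold cauchyRowProd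
  fun_prop

lemma aeval_charpolyRev {n R S : Type*} [Fintype n] [DecidableEq n] [CommRing R] [CommRing S]
    [Algebra R S] (M : Matrix n n R) (z : S) :
    aeval z M.charpolyRev = (1 - z • M.map (algebraMap R S)).det := by
  rw [charpolyRev, AlgHom.map_det]
  congr 1
  ext i j
  simp [Matrix.one_apply, apply_ite, mul_comm z]

variable {n R S : Type*} [Fintype n] [DecidableEq n] [CommRing R] [CommRing S] [Algebra R S]
  {A : Matrix n n R} {P : (Matrix n n S)ˣ} {α : n → S}

lemma cauchyRowProd_mem_adjoin (hA : A.map (algebraMap R S) = conjDiagonal P α) {u v : n → S}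
    (hu : u ∈ Algebra.adjoin R {α}) (hv : v ∈ Algebra.adjoin R {α}) :
    cauchyRowProd u v ∈ Algebra.adjoin R {α} := by
  obtain ⟨q, rfl⟩ := Algebra.adjoin_mem_exists_aeval _ _ hv
  have key : cauchyRowProd u (aeval α q) = aeval u (aeval A q).charpolyRev := by
    funext k
    have hone : (1 : Matrix n n S) - u k • conjDiagonal P (aeval α q) =
        conjDiagonal P (1 - u k • aeval α q) := by
      rw [map_sub, map_one, map_smul]
    rw [aeval_pi_apply₂, aeval_charpolyRev, map_aeval_eq_conjDiagonal hA, hone, det_conjDiagonal]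
    rfl
  exact key ▸ Algebra.adjoin_singleton_le hu (aeval_mem_adjoin_singleton R u)

lemma isIntegral_of_mem_adjoin (hA : A.map (algebraMap R S) = conjDiagonal P α) {x : n → S}
    (hx : x ∈ Algebra.adjoin R {α}) : IsIntegral R x := by
  obtain ⟨q, rfl⟩ := Algebra.adjoin_mem_exists_aeval _ _ hx
  refine (isIntegral_algHom_iff ((conjDiagonal P).restrictScalars R)
    (conjDiagonal_injective P)).1 ?_
  have hq : IsIntegral R ((aeval A q).map (algebraMap R S)) :=
    (isIntegral (aeval A q)).map (Algebra.ofId R S).mapMatrix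
  rwa [map_aeval_eq_conjDiagonal hA] at hq

lemma cauchyRowProd_div_mem_normOne {K L : Type*} [Field K] [Field L] [Algebra K L]
    {A : Matrix n n K} {P : (Matrix n n L)ˣ} {α : n → L}
    (hA : A.map (algebraMap K L) = conjDiagonal P α) {u v : n → L} (hu : u ∈ Algebra.adjoin K {α})
    (hv : v ∈ Algebra.adjoin K {α}) (hne : ∀ k, cauchyRowProd v u k ≠ 0) :
    cauchyRowProd u v * (cauchyRowProd v u)⁻¹ ∈ normOne (Algebra.adjoin K {α}) := by
  have hvu := cauchyRowProd_mem_adjoin hA hv hu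
  refine ⟨mul_mem (cauchyRowProd_mem_adjoin hA hu hv)
    (inv_mem_of_forall_isIntegral hvu (isIntegral_of_mem_adjoin hA hvu) hne), ?_⟩
  simp only [Pi.mul_apply, Pi.inv_apply]
  rw [Finset.prod_mul_distrib, Finset.prod_inv_distrib, prod_cauchyRowProd_comm]
  exact mul_inv_cancel₀ (Finset.prod_ne_zero_iff.2 fun k _ => hne k)

end CauchyRowProd

section RealClosure

variable {K : Type*} [Field K] [Algebra K ℝ]

lemma adjoin_real_subset_closure_adjoin {R : Type*} [Ring R] [TopologicalSpace R]
    [IsTopologicalRing R] [Algebra ℝ R] [ContinuousSMul ℝ R] [Algebra K R] [IsScalarTower K ℝ R]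
    (s : Set R) : (Algebra.adjoin ℝ s : Set R) ⊆ closure (Algebra.adjoin K s) := by
  let T : Subring R := (Algebra.adjoin K s).toSubring.topologicalClosure
  have hscalar (r : ℝ) : algebraMap ℝ R r ∈ T := by
    refine map_mem_closure (continuous_algebraMap ℝ R) (Rat.denseRange_cast r) ?_
    rintro _ ⟨q, rfl⟩
    rw [← map_ratCast (algebraMap K ℝ) q, ← IsScalarTower.algebraMap_apply]
    exact Subalgebra.algebraMap_mem _ _
  intro x hx
  change x ∈ T
  induction hx using Algebra.adjoin_induction with
  | mem x hx => exact subset_closure (Algebra.subset_adjoin hx)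
  | algebraMap r => exact hscalar r
  | add x y _ _ hx hy => exact T.add_mem hx hy
  | mul x y _ _ hx hy => exact T.mul_mem hx hy

variable {n : Type*} [Fintype n] [DecidableEq n] {A : Matrix n n K} {P : (Matrix n n ℂ)ˣ}
  {α : n → ℂ}

lemma pow_card_mem_closure_normOne (hA : A.map (algebraMap K ℂ) = conjDiagonal P α) {w : n → ℂ}
    (hw : w ∈ Algebra.adjoin ℝ {α}) (hw_one : ∏ k, w k = 1) (s : Finset n)
    (hs : Set.indicator s 1 ∈ Algebra.adjoin ℝ {α}) :
    w ^ s.card ∈ closure (normOne (Algebra.adjoin K {α})) := by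
  let e : n → ℂ := Set.indicator s 1
  have hnum : cauchyRowProd (1 - w) e = w ^ s.card := cauchyRowProd_one_sub_indicator w s
  have hden : cauchyRowProd e (1 - w) = 1 := cauchyRowProd_indicator_one_sub hw_one s
  let F : (n → ℂ) × (n → ℂ) → n → ℂ := fun x => cauchyRowProd x.1 x.2 * (cauchyRowProd x.2 x.1)⁻¹
  let O : Set ((n → ℂ) × (n → ℂ)) := {x | ∀ k, cauchyRowProd x.2 x.1 k ≠ 0}
  have hcont_swap : Continuous fun x : (n → ℂ) × (n → ℂ) => cauchyRowProd x.2 x.1 :=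
    continuous_cauchyRowProd.comp continuous_swap
  have hO : IsOpen O := by
    simp only [O, Set.ofPred_forall]
    exact isOpen_iInter_of_finite fun k =>
      isOpen_ne_fun ((continuous_apply k).comp hcont_swap) continuous_const
  have hmemO : (1 - w, e) ∈ O := fun k => by simp [hden]
  have hF : ContinuousAt F (1 - w, e) := by
    refine continuous_cauchyRowProd.continuousAt.mul (continuousAt_pi.2 fun k => ?_)
    exact ((continuous_apply k).comp hcont_swap).continuousAt.inv₀ (hmemO k)
  have hclosure : (1 - w, e) ∈ closure
      ((Algebra.adjoin K {α} : Set (n → ℂ)) ×ˢ (Algebra.adjoin K {α} : Set (n → ℂ))) := by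
    rw [closure_prod_eq]
    exact ⟨adjoin_real_subset_closure_adjoin _ (sub_mem (one_mem _) hw),
      adjoin_real_subset_closure_adjoin _ hs⟩
  have hvalue : F (1 - w, e) = w ^ s.card := by simp [F, hnum, hden]
  rw [← hvalue]
  refine hF.continuousWithinAt.mem_closure (hO.inter_closure ⟨hmemO, hclosure⟩) ?_
  rintro ⟨u, v⟩ ⟨hne, hu, hv⟩
  exact cauchyRowProd_div_mem_normOne hA hu hv hne

end RealClosure

section RealStructure

lemma exists_eq_map_add_I_mul_map (q : ℂ[X]) : ∃ p r : ℝ[X],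
    q = p.map (algebraMap ℝ ℂ) + C Complex.I * r.map (algebraMap ℝ ℂ) := by
  induction q using Polynomial.induction_on' with
  | add q₁ q₂ h₁ h₂ =>
    obtain ⟨p₁, r₁, rfl⟩ := h₁
    obtain ⟨p₂, r₂, rfl⟩ := h₂
    refine ⟨p₁ + p₂, r₁ + r₂, ?_⟩
    simp only [Polynomial.map_add]
    ring
  | monomial m a =>
    refine ⟨monomial m a.re, monomial m a.im, ?_⟩
    rw [map_monomial, map_monomial, C_mul_monomial, ← map_add, mul_comm]
    exact congrArg (monomial m) (Complex.re_add_im a).symm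

variable {n : Type*} {α : n → ℂ} {τ : Equiv.Perm n}

lemma mem_adjoin_real_iff [Finite n] (hα : Function.Injective α) (hτ : ∀ k, α (τ k) = conj (α k))
    {u : n → ℂ} : u ∈ Algebra.adjoin ℝ {α} ↔ ∀ k, u (τ k) = conj (u k) := by
  constructor
  · intro hu k
    obtain ⟨p, rfl⟩ := Algebra.adjoin_mem_exists_aeval _ _ hu
    simp only [aeval_pi_apply₂, hτ, aeval_conj]
  intro hu
  obtain ⟨q, rfl⟩ := exists_aeval_eq_of_injective hα u
  obtain ⟨p, r, rfl⟩ := exists_eq_map_add_I_mul_map q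
  have hsplit (k : n) : aeval α (p.map (algebraMap ℝ ℂ) + C Complex.I * r.map (algebraMap ℝ ℂ)) k =
      aeval (α k) p + Complex.I * aeval (α k) r := by
    simp
  suffices hp : aeval α p = aeval α (p.map (algebraMap ℝ ℂ) + C Complex.I * r.map (algebraMap ℝ ℂ))
    from hp ▸ aeval_mem_adjoin_singleton ℝ α
  funext k
  have hconj := hu k
  rw [hsplit, hsplit, hτ, aeval_conj, aeval_conj, map_add, map_mul, Complex.conj_I] at hconj
  have hI : Complex.I * conj (aeval (α k) r) = 0 := by linear_combination hconj / 2
  have hr_zero : aeval (α k) r = 0 := by simpa using hI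
  rw [hsplit, hr_zero, mul_zero, add_zero, aeval_pi_apply₂]

lemma exists_conj_equivariant_pow_eq (hτ : ∀ k, α (τ k) = conj (α k)) (him : ∀ k, (α k).im ≠ 0)
    {t : n → ℂ} (ht : ∀ k, t (τ k) = conj (t k)) {m : ℕ} (hm : m ≠ 0) :
    ∃ w : n → ℂ, (∀ k, w (τ k) = conj (w k)) ∧ w ^ m = t := by
  choose root hroot using fun z : ℂ => IsAlgClosed.exists_pow_nat_eq z (Nat.pos_of_ne_zero hm)
  refine ⟨fun k => if 0 < (α k).im then root (t k) else conj (root (conj (t k))),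
    fun k => ?_, funext fun k => ?_⟩
  · dsimp only
    rw [hτ, ht, Complex.conj_im, Complex.conj_conj]
    rcases (him k).lt_or_gt with h | h
    · rw [if_pos (neg_pos.2 h), if_neg h.not_gt, Complex.conj_conj]
    · rw [if_neg (neg_neg_of_pos h).not_gt, if_pos h]
  · rw [Pi.pow_apply]
    split_ifs
    · exact hroot _
    · rw [← map_pow, hroot, Complex.conj_conj]

lemma exists_prod_eq_one_pow_card_eq [Fintype n] (hτ : ∀ k, α (τ k) = conj (α k))
    (him : ∀ k, (α k).im ≠ 0) {t : n → ℂ} (ht : ∀ k, t (τ k) = conj (t k)) (ht_one : ∏ k, t k = 1) :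
    ∃ w : n → ℂ, (∀ k, w (τ k) = conj (w k)) ∧ ∏ k, w k = 1 ∧ w ^ Fintype.card n = t := by
  cases isEmpty_or_nonempty n
  · exact ⟨1, by simp, by simp, Subsingleton.elim _ _⟩
  have hcard : Fintype.card n ≠ 0 := Fintype.card_ne_zero
  -- The square of an equivariant `2 * card n`-th root has as product the square of a real number.
  obtain ⟨v, hv, hvt⟩ := exists_conj_equivariant_pow_eq hτ him ht (mul_ne_zero two_ne_zero hcard)
  obtain ⟨r, hr⟩ : ∃ r : ℝ, ∏ k, v k = r := by
    refine Complex.conj_eq_iff_real.1 ?_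
    rw [map_prod, ← Equiv.prod_comp τ v]
    exact Finset.prod_congr rfl fun k _ => (hv k).symm
  have hr_pow : (r ^ 2) ^ Fintype.card n = 1 := by
    have : (∏ k, v k) ^ (2 * Fintype.card n) = 1 := by
      rw [← Finset.prod_pow, ← ht_one, ← hvt]
      rfl
    rw [hr, pow_mul] at this
    exact_mod_cast this
  refine ⟨v ^ 2, fun k => by simp [hv], ?_, by rw [← pow_mul, hvt]⟩
  simp only [Pi.pow_apply]
  have hr_sq : r ^ 2 = 1 := (pow_eq_one_iff_of_nonneg (sq_nonneg r) hcard).1 hr_pow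
  rw [Finset.prod_pow, hr, ← Complex.ofReal_pow, hr_sq, Complex.ofReal_one]

variable [Fintype n] [DecidableEq n] {M : Matrix n n ℝ} {P : (Matrix n n ℂ)ˣ}

lemma exists_perm_eq_conj (hα : Function.Injective α)
    (hM : M.map (algebraMap ℝ ℂ) = conjDiagonal P α) :
    ∃ τ : Equiv.Perm n, ∀ k, α (τ k) = conj (α k) := by
  have haeval (z : ℂ) : aeval z M.charpoly = ∏ k, (z - α k) := by
    rw [← eval_map_algebraMap, ← charpoly_map, hM, charpoly_conjDiagonal, eval_prod]
    simp only [eval_sub, eval_X, eval_C]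
  have hconj (k : n) : ∃ l, α l = conj (α k) := by
    have hk : aeval (α k) M.charpoly = 0 := by
      rw [haeval, Finset.prod_eq_zero (Finset.mem_univ k) (sub_self _)]
    have hk_conj : aeval (conj (α k)) M.charpoly = 0 := by rw [aeval_conj, hk, map_zero]
    rw [haeval, Finset.prod_eq_zero_iff] at hk_conj
    obtain ⟨l, -, hl⟩ := hk_conj
    exact ⟨l, (sub_eq_zero.1 hl).symm⟩
  choose τ hτ using hconj
  have hinv : Function.Involutive τ := fun k => hα (by rw [hτ, hτ, Complex.conj_conj])
  exact ⟨hinv.toPerm, hτ⟩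

lemma exists_map_eq_conjDiagonal_of_commute (hα : Function.Injective α)
    (hM : M.map (algebraMap ℝ ℂ) = conjDiagonal P α) {B : Matrix n n ℝ} (hB : Commute B M) :
    ∃ t ∈ Algebra.adjoin ℝ {α}, B.map (algebraMap ℝ ℂ) = conjDiagonal P t := by
  have hBM : Commute (B.map (algebraMap ℝ ℂ)) (conjDiagonal P α) :=
    hM ▸ hB.map (algebraMap ℝ ℂ).mapMatrix
  obtain ⟨t, ht⟩ := exists_eq_conjDiagonal_of_commute hα hBM
  obtain ⟨q, rfl⟩ := exists_aeval_eq_of_injective hα t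
  obtain ⟨p, r, rfl⟩ := exists_eq_map_add_I_mul_map q
  have hsplit : B.map (algebraMap ℝ ℂ) = (aeval M p).map (algebraMap ℝ ℂ) +
      Complex.I • (aeval M r).map (algebraMap ℝ ℂ) := by
    rw [map_aeval_eq_conjDiagonal hM, map_aeval_eq_conjDiagonal hM, ht, map_add, map_mul, aeval_C,
      aeval_map_algebraMap, aeval_map_algebraMap, ← Algebra.smul_def, map_add, map_smul]
  have hBp : B = aeval M p := by
    ext i j
    simpa using congrArg Complex.re (congrFun₂ hsplit i j)
  exact ⟨aeval α p, aeval_mem_adjoin_singleton ℝ α, hBp ▸ map_aeval_eq_conjDiagonal hM p⟩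

end RealStructure

section Density

variable {n K : Type*} [Fintype n] [DecidableEq n] [Field K] [Algebra K ℝ]
  {A : Matrix n n K} {P : (Matrix n n ℂ)ˣ} {α : n → ℂ}

lemma normOne_adjoin_real_subset_closure (hα : Function.Injective α)
    (hA : A.map (algebraMap K ℂ) = conjDiagonal P α) :
    normOne (Algebra.adjoin ℝ {α}) ⊆ closure (normOne (Algebra.adjoin K {α})) := by
  rintro t ⟨ht, ht_one⟩
  obtain ⟨τ, hτ⟩ := exists_perm_eq_conj hα ((map_algebraMap_map_algebraMap A).trans hA)
  by_cases hreal : ∃ k, (α k).im = 0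
  · obtain ⟨k, hk⟩ := hreal
    have hfix : τ k = k := hα ((hτ k).trans (Complex.conj_eq_iff_im.2 hk))
    have hindicator : Set.indicator ({k} : Finset n) 1 ∈ Algebra.adjoin ℝ {α} := by
      refine (mem_adjoin_real_iff hα hτ).2 fun l => ?_
      have hl : τ l = k ↔ l = k := by rw [← τ.injective.eq_iff (a := l), hfix]
      by_cases h : l = k <;> simp [hl, h, hfix]
    simpa using pow_card_mem_closure_normOne hA ht ht_one {k} hindicator
  · push Not at hreal
    obtain ⟨w, hw, hw_one, rfl⟩ :=
      exists_prod_eq_one_pow_card_eq hτ hreal ((mem_adjoin_real_iff hα hτ).1 ht) ht_one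
    refine pow_card_mem_closure_normOne hA ((mem_adjoin_real_iff hα hτ).2 hw) hw_one Finset.univ ?_
    rw [Finset.coe_univ, Set.indicator_univ]
    exact one_mem _

lemma exists_commute_of_mem_normOne (hA : A.map (algebraMap K ℂ) = conjDiagonal P α) {x : n → ℂ}
    (hx : x ∈ normOne (Algebra.adjoin K {α})) :
    ∃ B : SpecialLinearGroup n ℝ, (Commute (B : Matrix n n ℝ) (A.map (algebraMap K ℝ)) ∧
      ∀ i j, (B : Matrix n n ℝ) i j ∈ Set.range (algebraMap K ℝ)) ∧
      (B : Matrix n n ℝ).map (algebraMap ℝ ℂ) = conjDiagonal P x := by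
  obtain ⟨hx_mem, hx_one⟩ := hx
  obtain ⟨q, rfl⟩ := Algebra.adjoin_mem_exists_aeval _ _ hx_mem
  have hq := map_aeval_eq_conjDiagonal hA q
  have hdet : (aeval A q).det = 1 := by
    apply (algebraMap K ℂ).injective
    rw [RingHom.map_det, map_one, RingHom.mapMatrix_apply, hq, det_conjDiagonal]
    exact hx_one
  have hcomm : Commute (aeval A q) A := by
    simpa using (Commute.all q X).map (aeval A)
  exact ⟨SpecialLinearGroup.map (algebraMap K ℝ) ⟨aeval A q, hdet⟩,
    ⟨hcomm.map (algebraMap K ℝ).mapMatrix, fun i j => ⟨aeval A q i j, rfl⟩⟩,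
    (map_algebraMap_map_algebraMap _).trans hq⟩

lemma isInducing_specialLinearGroup_map_complex :
    IsInducing fun B : SpecialLinearGroup n ℝ => (B : Matrix n n ℝ).map (algebraMap ℝ ℂ) := by
  have hmap : IsInducing fun M : Matrix n n ℝ => M.map (algebraMap ℝ ℂ) :=
    IsInducing.piMap fun _ => IsInducing.piMap fun _ =>
      Complex.isometry_ofReal.isEmbedding.isInducing
  have hval : IsInducing ((↑) : SpecialLinearGroup n ℝ → Matrix n n ℝ) := ⟨rfl⟩
  exact hmap.comp hval

lemma continuous_conjDiagonal (P : (Matrix n n ℂ)ˣ) : Continuous (conjDiagonal P) :=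
  (continuous_const.matrix_mul continuous_id.matrix_diagonal).matrix_mul continuous_const

theorem rational_points_dense_in_centralizer_general (A : Matrix n n K)
    (hA : (A.map (algebraMap K ℂ)).charpoly.roots.toFinset.card = Fintype.card n) :
    {B : SpecialLinearGroup n ℝ | Commute (B : Matrix n n ℝ) (A.map (algebraMap K ℝ))} ⊆
      closure {B | Commute (B : Matrix n n ℝ) (A.map (algebraMap K ℝ)) ∧
        ∀ i j, (B : Matrix n n ℝ) i j ∈ Set.range (algebraMap K ℝ)} := by
  obtain ⟨P, α, hα, hAα⟩ := exists_eq_conjDiagonal_of_card_roots _ hA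
  intro B hB
  obtain ⟨t, ht, hBt⟩ :=
    exists_map_eq_conjDiagonal_of_commute hα ((map_algebraMap_map_algebraMap A).trans hAα) hB
  have ht_one : ∏ k, t k = 1 := by
    rw [← det_conjDiagonal P, ← hBt, ← RingHom.mapMatrix_apply, ← RingHom.map_det,
      B.det_coe, map_one]
  have ht_closure := normOne_adjoin_real_subset_closure hα hAα ⟨ht, ht_one⟩
  rw [isInducing_specialLinearGroup_map_complex.closure_eq_preimage_closure_image,
    Set.mem_preimage, hBt]
  exact map_mem_closure (continuous_conjDiagonal P) ht_closure fun x hx =>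
    exists_commute_of_mem_normOne hAα hx

end Density

/-- If `A ∈ SL(n,ℚ)` has `n` distinct complex eigenvalues, then the rational points of the
centralizer of `A` in `SL(n,ℝ)` are dense in that centralizer. -/
theorem rational_points_dense_in_centralizer (n : ℕ) (A : Matrix.SpecialLinearGroup (Fin n) ℚ)
    (hA : (((A : Matrix (Fin n) (Fin n) ℚ).map ((↑) : ℚ → ℂ)).charpoly.roots).toFinset.card = n) :
    Dense (X := {B : Matrix.SpecialLinearGroup (Fin n) ℝ //
        B * Matrix.SpecialLinearGroup.map (Rat.castHom ℝ) A
          = Matrix.SpecialLinearGroup.map (Rat.castHom ℝ) A * B})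
      {B | ∀ i j, ((B : Matrix.SpecialLinearGroup (Fin n) ℝ) : Matrix (Fin n) (Fin n) ℝ) i j ∈
        Set.range ((↑) : ℚ → ℝ)} := by
  have hA_card :
      ((A : Matrix (Fin n) (Fin n) ℚ).map (algebraMap ℚ ℂ)).charpoly.roots.toFinset.card =
        Fintype.card (Fin n) := by
    rwa [Fintype.card_fin, show ⇑(algebraMap ℚ ℂ) = ((↑) : ℚ → ℂ) from funext (eq_ratCast _)]
  refine fun B => closure_subtype.2 (closure_mono ?_
    (rational_points_dense_in_centralizer_general _ hA_card (congrArg Subtype.val B.2)))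
  exact fun C hC => ⟨⟨C, Subtype.ext hC.1⟩, hC.2, rfl⟩
end

section
/- Rational points are dense in the real symplectic centralizer of a regular rational symplectic matrix: let A be a 2k×2k matrix over ℚ lying in Sp(2k,ℚ) whose characteristic polynomial has 2k distinct roots in ℂ, and let A' denote its image in Sp(2k,ℝ) under the entrywise coercion. Then the set {B ∈ Sp(2k,ℝ) : B commutes with A' and all entries of B are rational} is dense in the centralizer {B ∈ Sp(2k,ℝ) : B commutes with A'}. -/
/-!
Let `σ` be the adjoint for the symplectic form, so that `B` is symplectic iff `B * σ B = 1`.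
The centralizer of a matrix `A` with separable characteristic polynomial is the commutative algebra
of polynomials in `A`; when `A` is symplectic it is stable under `σ`, because `σ A = A⁻¹`.
As in Hilbert's Theorem 90, every symplectic `B` in it is a quotient `Y * (σ Y)⁻¹`: take
`Y = Z + B * σ Z` with `Z = c + A`; this `Y` is invertible for all but finitely many scalars `c`
because neither `1` nor `-1` is an eigenvalue of `A`. The coefficients of the polynomial expressing
`Y` in terms of `A` can be approximated by rational numbers, and `Y ↦ Y * (σ Y)⁻¹` is continuous
and maps rational points to rational points.
-/

open Matrix Polynomial

section MatrixInverse

variable {n R S : Type*} [Fintype n] [DecidableEq n] [CommRing R] [CommRing S]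

lemma commute_nonsing_inv_left {X Y : Matrix n n R}
    (hX : IsUnit X.det) (h : Commute X Y) : Commute X⁻¹ Y := by
  obtain ⟨u, rfl⟩ := (isUnit_iff_isUnit_det X).2 hX
  rw [← coe_units_inv]
  exact h.units_inv_left

lemma map_nonsing_inv (f : R →+* S) {X : Matrix n n R}
    (hX : IsUnit X.det) : f.mapMatrix X⁻¹ = (f.mapMatrix X)⁻¹ := by
  refine (inv_eq_right_inv ?_).symm
  rw [← map_mul, mul_nonsing_inv X hX, map_one]

end MatrixInverse

section SymplecticAdjoint

variable {l R S : Type*} [Fintype l] [DecidableEq l] [CommRing R] [CommRing S]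

/-- The adjoint of a matrix with respect to the symplectic form `J`, that is `J⁻¹ * Xᵀ * J`, written
without an inverse as in `SymplecticGroup.coe_inv`. -/
def symplecticAdjoint (X : Matrix (l ⊕ l) (l ⊕ l) R) : Matrix (l ⊕ l) (l ⊕ l) R :=
  -J l R * Xᵀ * J l R

lemma symplecticAdjoint_mul (X Y : Matrix (l ⊕ l) (l ⊕ l) R) :
    symplecticAdjoint (X * Y) = symplecticAdjoint Y * symplecticAdjoint X := by
  calc symplecticAdjoint (X * Y) = J l R * Yᵀ * -1 * Xᵀ * J l R := by
        simp [symplecticAdjoint, Matrix.mul_assoc]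
    _ = symplecticAdjoint Y * symplecticAdjoint X := by
        rw [← J_squared]
        simp only [symplecticAdjoint, neg_mul, mul_neg, neg_neg, Matrix.mul_assoc]

lemma symplecticAdjoint_add (X Y : Matrix (l ⊕ l) (l ⊕ l) R) :
    symplecticAdjoint (X + Y) = symplecticAdjoint X + symplecticAdjoint Y := by
  simp only [symplecticAdjoint, transpose_add, Matrix.mul_add, Matrix.add_mul]

lemma symplecticAdjoint_smul (c : R) (X : Matrix (l ⊕ l) (l ⊕ l) R) :
    symplecticAdjoint (c • X) = c • symplecticAdjoint X := by
  simp only [symplecticAdjoint, transpose_smul, mul_smul_comm, smul_mul_assoc]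

lemma symplecticAdjoint_one : symplecticAdjoint (1 : Matrix (l ⊕ l) (l ⊕ l) R) = 1 := by
  simp [symplecticAdjoint, J_squared]

lemma symplecticAdjoint_symplecticAdjoint (X : Matrix (l ⊕ l) (l ⊕ l) R) :
    symplecticAdjoint (symplecticAdjoint X) = X := by
  calc symplecticAdjoint (symplecticAdjoint X) = (J l R * J l R) * X * (J l R * J l R) := by
        simp only [symplecticAdjoint, transpose_neg, transpose_mul, transpose_transpose,
          J_transpose, neg_mul, mul_neg, neg_neg, Matrix.mul_assoc]
    _ = X := by simp [J_squared]

lemma map_symplecticAdjoint (f : R →+* S) (X : Matrix (l ⊕ l) (l ⊕ l) R) :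
    f.mapMatrix (symplecticAdjoint X) = symplecticAdjoint (f.mapMatrix X) := by
  have hJ : f.mapMatrix (J l R) = J l S := map_J l f
  simp only [symplecticAdjoint, map_mul, map_neg, hJ, RingHom.mapMatrix_apply, transpose_map]

lemma isUnit_det_symplecticAdjoint {X : Matrix (l ⊕ l) (l ⊕ l) R} (hX : IsUnit X.det) :
    IsUnit (symplecticAdjoint X).det := by
  refine isUnit_det_of_left_inverse (B := symplecticAdjoint X⁻¹) ?_
  rw [← symplecticAdjoint_mul, mul_nonsing_inv X hX, symplecticAdjoint_one]

lemma mem_symplecticGroup_iff_mul_symplecticAdjoint {X : Matrix (l ⊕ l) (l ⊕ l) R} :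
    X ∈ symplecticGroup l R ↔ X * symplecticAdjoint X = 1 := by
  refine ⟨fun hX ↦ ?_, fun hX ↦ ?_⟩
  · rw [symplecticAdjoint, ← SymplecticGroup.inv_eq_symplectic_inv X hX,
      mul_nonsing_inv X (SymplecticGroup.symplectic_det hX)]
  · have hJ : J l R * symplecticAdjoint X = Xᵀ * J l R := by
      rw [symplecticAdjoint, ← Matrix.mul_assoc, ← Matrix.mul_assoc, mul_neg, J_squared, neg_neg,
        one_mul]
    rw [← SymplecticGroup.transpose_mem_iff, SymplecticGroup.mem_iff, transpose_transpose, ← hJ,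
      Matrix.mul_assoc, mul_eq_one_comm.1 hX, mul_one]

lemma commute_symplecticAdjoint {A Y : Matrix (l ⊕ l) (l ⊕ l) R} (hA : A ∈ symplecticGroup l R)
    (hYA : Commute Y A) : Commute (symplecticAdjoint Y) A := by
  rw [mem_symplecticGroup_iff_mul_symplecticAdjoint] at hA
  let u : (Matrix (l ⊕ l) (l ⊕ l) R)ˣ := ⟨A, symplecticAdjoint A, hA, mul_eq_one_comm.1 hA⟩
  have h : Commute (symplecticAdjoint Y) (↑u⁻¹ : Matrix (l ⊕ l) (l ⊕ l) R) := by
    change _ * symplecticAdjoint A = symplecticAdjoint A * _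
    rw [← symplecticAdjoint_mul, ← symplecticAdjoint_mul, hYA.eq]
  exact Commute.units_inv_right_iff.1 h

/-- The quotient `Y * (σ Y)⁻¹`, where `σ` is the symplectic adjoint: the analogue of `y / σ y` in
Hilbert's Theorem 90. Like every `⁻¹` of matrices it is meaningful only when `Y` is invertible. -/
noncomputable def symplecticQuotient (Y : Matrix (l ⊕ l) (l ⊕ l) R) :
    Matrix (l ⊕ l) (l ⊕ l) R :=
  Y * (symplecticAdjoint Y)⁻¹

lemma map_symplecticQuotient (f : R →+* S) {Y : Matrix (l ⊕ l) (l ⊕ l) R} (hY : IsUnit Y.det) :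
    f.mapMatrix (symplecticQuotient Y) = symplecticQuotient (f.mapMatrix Y) := by
  rw [symplecticQuotient, symplecticQuotient, map_mul,
    map_nonsing_inv f (isUnit_det_symplecticAdjoint hY), map_symplecticAdjoint]

lemma symplecticQuotient_mem_symplecticGroup {Y : Matrix (l ⊕ l) (l ⊕ l) R} (hY : IsUnit Y.det)
    (hYY : Commute (symplecticAdjoint Y) Y) : symplecticQuotient Y ∈ symplecticGroup l R := by
  have hσY := isUnit_det_symplecticAdjoint hY
  have adjoint_inv : symplecticAdjoint (symplecticAdjoint Y)⁻¹ = Y⁻¹ := by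
    refine (inv_eq_left_inv ?_).symm
    nth_rewrite 2 [← symplecticAdjoint_symplecticAdjoint Y]
    rw [← symplecticAdjoint_mul, mul_nonsing_inv _ hσY, symplecticAdjoint_one]
  rw [mem_symplecticGroup_iff_mul_symplecticAdjoint, symplecticQuotient, symplecticAdjoint_mul,
    adjoint_inv, ← (commute_nonsing_inv_left hσY hYY).eq, Matrix.mul_assoc,
    mul_nonsing_inv_cancel_left _ _ hY, nonsing_inv_mul _ hσY]

lemma commute_symplecticQuotient {A Y : Matrix (l ⊕ l) (l ⊕ l) R}
    (hA : A ∈ symplecticGroup l R) (hY : IsUnit Y.det) (hYA : Commute Y A) :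
    Commute (symplecticQuotient Y) A :=
  hYA.mul_left <| commute_nonsing_inv_left (isUnit_det_symplecticAdjoint hY)
    (commute_symplecticAdjoint hA hYA)

lemma symplecticQuotient_add_mul_symplecticAdjoint {B Z : Matrix (l ⊕ l) (l ⊕ l) R}
    (hB : B ∈ symplecticGroup l R) (hBZ : Commute B Z)
    (hdet : IsUnit (Z + B * symplecticAdjoint Z).det) :
    symplecticQuotient (Z + B * symplecticAdjoint Z) = B := by
  rw [mem_symplecticGroup_iff_mul_symplecticAdjoint] at hB
  have hσ : Z + B * symplecticAdjoint Z = B * symplecticAdjoint (Z + B * symplecticAdjoint Z) := by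
    rw [symplecticAdjoint_add, symplecticAdjoint_mul, symplecticAdjoint_symplecticAdjoint,
      Matrix.mul_add, ← Matrix.mul_assoc, hBZ.eq, Matrix.mul_assoc Z, hB, mul_one, add_comm]
  rw [symplecticQuotient]
  nth_rewrite 1 [hσ]
  exact mul_nonsing_inv_cancel_right _ _ (isUnit_det_symplecticAdjoint hdet)

end SymplecticAdjoint

section Diagonalization

variable {n R K L : Type*} [Fintype n] [DecidableEq n] [CommRing R] [Field K] [Field L]

lemma exists_semiconjBy_diagonal {A : Matrix n n K} (hA : A.charpoly.Separable)
    (hsplits : A.charpoly.Splits) :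
    ∃ (S : (Matrix n n K)ˣ) (d : n → K), d.Injective ∧ SemiconjBy S.val (diagonal d) A := by
  classical
  have hcard : Fintype.card n = Fintype.card A.charpoly.roots.toFinset := by
    rw [Fintype.card_coe, Multiset.toFinset_card_of_nodup (nodup_roots hA),
      ← hsplits.natDegree_eq_card_roots, charpoly_natDegree_eq_dim]
  let e : n ≃ A.charpoly.roots.toFinset := Fintype.equivOfCardEq hcard
  have hroot (i : n) : Module.End.HasEigenvalue (toLin' A) (e i : K) := by
    rw [Module.End.hasEigenvalue_iff_isRoot_charpoly, charpoly_toLin']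
    exact isRoot_of_mem_roots (Multiset.mem_toFinset.1 (e i).2)
  choose v hv using fun i ↦ (hroot i).exists_hasEigenvector
  have he : Function.Injective fun i ↦ (e i : K) := Subtype.val_injective.comp e.injective
  have hli : LinearIndependent K (of v)ᵀ.col :=
    Module.End.eigenvectors_linearIndependent' (toLin' A) _ he v hv
  obtain ⟨S, hS⟩ := linearIndependent_cols_iff_isUnit.1 hli
  refine ⟨S, fun i ↦ e i, he, ?_⟩
  ext i j
  have hij := congrFun ((hv j).apply_eq_smul) i
  rw [hS, mul_diagonal, mul_comm]
  exact hij.symm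

lemma eq_diagonal_of_commute_diagonal [NoZeroDivisors R] {X : Matrix n n R} {d : n → R}
    (hd : d.Injective) (hX : Commute X (diagonal d)) : X = diagonal X.diag := by
  ext i j
  obtain rfl | hij := eq_or_ne i j
  · simp
  have hentry : X i j * d j = d i * X i j := by
    simpa only [mul_diagonal, diagonal_mul] using congrFun₂ hX.eq i j
  have hzero : (d j - d i) * X i j = 0 := by linear_combination hentry
  rw [diagonal_apply_ne _ hij]
  exact (mul_eq_zero.1 hzero).resolve_left (sub_ne_zero.2 (hd.ne hij.symm))

lemma exists_semiconjBy_diagonal_of_commute [NoZeroDivisors R] {A X : Matrix n n R}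
    {S : (Matrix n n R)ˣ} {d : n → R} (hd : d.Injective)
    (hA : SemiconjBy S.val (diagonal d) A) (hX : Commute X A) :
    ∃ b : n → R, SemiconjBy S.val (diagonal b) X := by
  have hSX : SemiconjBy S.val (S⁻¹.val * (X * S.val)) X := by
    rw [SemiconjBy, S.mul_inv_cancel_left]
  have hcomm : Commute (S⁻¹.val * (X * S.val)) (diagonal d) :=
    hA.units_inv_symm_left.mul_left (hX.semiconjBy.mul_left hA)
  exact ⟨_, eq_diagonal_of_commute_diagonal hd hcomm ▸ hSX⟩

lemma semiconjBy_aeval_right {M : Type*} [Semiring M] [Algebra R M] {s a b : M}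
    (h : SemiconjBy s a b) (p : R[X]) : SemiconjBy s (aeval a p) (aeval b p) := by
  induction p using Polynomial.induction_on' with
  | add p q hp hq => simpa only [map_add] using hp.add_right hq
  | monomial k c =>
    simp only [aeval_monomial]
    exact SemiconjBy.mul_right (Algebra.commutes c s).symm (h.pow_right k)

lemma aeval_diagonal (d : n → R) (p : R[X]) :
    aeval (diagonal d) p = diagonal fun i ↦ p.eval (d i) := by
  have h := aeval_algHom_apply (diagonalAlgHom R : (n → R) →ₐ[R] Matrix n n R) d p
  simpa [aeval_pi_apply, Function.comp_def] using h

lemma mem_adjoin_of_commute_of_semiconjBy_diagonal {A X : Matrix n n K} {S : (Matrix n n K)ˣ}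
    {d : n → K} (hd : d.Injective) (hA : SemiconjBy S.val (diagonal d) A) (hX : Commute X A) :
    X ∈ Algebra.adjoin K {A} := by
  obtain ⟨b, hb⟩ := exists_semiconjBy_diagonal_of_commute hd hA hX
  let p := Lagrange.interpolate Finset.univ d b
  have hp : aeval (diagonal d) p = diagonal b := by
    rw [aeval_diagonal]
    congr with i
    exact Lagrange.eval_interpolate_at_node b hd.injOn (Finset.mem_univ i)
  have hXp : X = aeval A p := by
    rw [← Units.mul_left_inj S, ← hb.eq, ← hp, (semiconjBy_aeval_right hA p).eq]
  exact hXp ▸ aeval_mem_adjoin_singleton K A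

/- A `K`-linear retraction `R → K`, applied entrywise, maps polynomials in `A` with coefficients in
`R` to polynomials in `A` with coefficients in `K`. -/
lemma mem_adjoin_of_map_mem_adjoin [Nontrivial R] [Algebra K R] {A X : Matrix n n K}
    (hX : (algebraMap K R).mapMatrix X ∈ Algebra.adjoin R {(algebraMap K R).mapMatrix A}) :
    X ∈ Algebra.adjoin K {A} := by
  obtain ⟨r, hr⟩ := (Algebra.linearMap K R).exists_leftInverse_of_injective
    (LinearMap.ker_eq_bot.2 (algebraMap K R).injective)
  have hr_smul (c : R) (M : Matrix n n K) :
      r.mapMatrix (c • (algebraMap K R).mapMatrix M) = r c • M := by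
    ext i j
    simp [mul_comm c, ← Algebra.smul_def, mul_comm (r c)]
  have hr_aeval (p : R[X]) :
      r.mapMatrix (aeval ((algebraMap K R).mapMatrix A) p) ∈ Algebra.adjoin K {A} := by
    induction p using Polynomial.induction_on' with
    | add p q hp hq => simpa only [map_add] using add_mem hp hq
    | monomial k c =>
      rw [aeval_monomial, ← Algebra.smul_def, ← map_pow, hr_smul]
      exact Subalgebra.smul_mem _ (pow_mem (Algebra.self_mem_adjoin_singleton K A) k) _
  rw [Algebra.adjoin_singleton_eq_range_aeval] at hX
  obtain ⟨p, hp⟩ := hX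
  have hrX : r.mapMatrix ((algebraMap K R).mapMatrix X) = X := by
    ext i j
    exact LinearMap.congr_fun hr (X i j)
  rw [← hrX, ← hp]
  exact hr_aeval p

lemma separable_charpoly_mapMatrix {A : Matrix n n K} (hA : A.charpoly.Separable) (f : K →+* R) :
    (f.mapMatrix A).charpoly.Separable := by
  rw [RingHom.mapMatrix_apply, charpoly_map]
  exact hA.map

lemma separable_charpoly_of_card_toFinset_roots [IsAlgClosed L] [DecidableEq L] {A : Matrix n n K}
    (f : K →+* L) (hA : (f.mapMatrix A).charpoly.roots.toFinset.card = Fintype.card n) :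
    A.charpoly.Separable := by
  rw [← separable_map f, ← charpoly_map]
  refine (nodup_roots_iff_of_splits (charpoly_monic _).ne_zero (IsAlgClosed.splits _)).1 ?_
  rw [← Multiset.toFinset_card_eq_card_iff_nodup, ← (IsAlgClosed.splits _).natDegree_eq_card_roots,
    charpoly_natDegree_eq_dim]
  exact hA

lemma mem_adjoin_of_commute {A X : Matrix n n K} (hA : A.charpoly.Separable) (hX : Commute X A) :
    X ∈ Algebra.adjoin K {A} := by
  obtain ⟨S, d, hd, hS⟩ := exists_semiconjBy_diagonal
    (separable_charpoly_mapMatrix hA (algebraMap K (AlgebraicClosure K))) (IsAlgClosed.splits _)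
  exact mem_adjoin_of_map_mem_adjoin
    (mem_adjoin_of_commute_of_semiconjBy_diagonal hd hS (hX.map (algebraMap K _).mapMatrix))

lemma det_eq_prod_of_semiconjBy_diagonal {X : Matrix n n R} {S : (Matrix n n R)ˣ} {d : n → R}
    (hX : SemiconjBy S.val (diagonal d) X) : X.det = ∏ i, d i := by
  have h := congrArg det hX.eq
  rw [det_mul, det_mul, det_diagonal, mul_comm] at h
  exact ((isUnits_det_units S).mul_right_cancel h).symm

lemma exists_det_smul_add_ne_zero [IsDomain R] [Infinite K] (f : K →+* R) {M N : Matrix n n K}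
    {S : (Matrix n n R)ˣ} {a b : n → R} (hM : SemiconjBy S.val (diagonal a) (f.mapMatrix M))
    (hN : SemiconjBy S.val (diagonal b) (f.mapMatrix N)) (hab : ∀ i, a i = 0 → b i ≠ 0) :
    ∃ c : K, (c • M + N).det ≠ 0 := by
  have hfinite : (⋃ i, {c : K | f c * a i + b i = 0}).Finite := by
    refine Set.finite_iUnion fun i ↦ Set.Subsingleton.finite fun c hc c' hc' ↦ ?_
    have hroots : f c * a i = f c' * a i := add_right_cancel (Eq.trans hc (Eq.symm hc'))
    refine f.injective (mul_right_cancel₀ (fun ha ↦ hab i ha ?_) hroots)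
    simpa [ha] using hc
  obtain ⟨c, hc⟩ := hfinite.exists_notMem
  have hdiag : SemiconjBy S.val (diagonal fun i ↦ f c * a i + b i) (f.mapMatrix (c • M + N)) := by
    have hfc : f.mapMatrix (c • M + N) = aeval (f.mapMatrix M) (C (f c) * X) + f.mapMatrix N := by
      ext i j
      simp [← Algebra.smul_def]
    have h := (semiconjBy_aeval_right hM (C (f c) * X)).add_right hN
    rw [aeval_diagonal, diagonal_add] at h
    simpa [hfc] using h
  refine ⟨c, fun hdet ↦ hc ?_⟩
  have hprod : ∏ i, (f c * a i + b i) = 0 := by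
    rw [← det_eq_prod_of_semiconjBy_diagonal hdiag, ← RingHom.map_det, hdet, map_zero]
  obtain ⟨i, -, hi⟩ := Finset.prod_eq_zero_iff.1 hprod
  exact Set.mem_iUnion.2 ⟨i, hi⟩

lemma mul_self_ne_one_of_diagonal_mul_mul_diagonal [NoZeroDivisors R] {M : Matrix n n R}
    {d : n → R} (hd : d.Injective) (hdet : M.det ≠ 0) (hM : ∀ i, M i i = 0)
    (hdM : diagonal d * M * diagonal d = M) (i : n) : d i * d i ≠ 1 := by
  intro hi
  refine hdet (det_eq_zero_of_row_eq_zero i fun j ↦ ?_)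
  obtain rfl | hij := eq_or_ne i j
  · exact hM i
  have hentry : d i * M i j * d j = M i j := by
    simpa only [mul_diagonal, diagonal_mul] using congrFun₂ hdM i j
  have hzero : (d j - d i) * M i j = 0 := by
    linear_combination d i * hentry - d j * M i j * hi
  exact (mul_eq_zero.1 hzero).resolve_left (sub_ne_zero.2 (hd.ne hij.symm))

end Diagonalization

section Symplectic

variable {l R K : Type*} [Fintype l] [DecidableEq l] [CommRing R] [Field K]

lemma dotProduct_J_mulVec_self (v : l ⊕ l → R) : v ⬝ᵥ J l R *ᵥ v = 0 := by
  simp [J, dotProduct, fromBlocks_mulVec, neg_mulVec, mul_comm]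

lemma mul_self_ne_one_of_mem_symplecticGroup [IsDomain R] {A : Matrix (l ⊕ l) (l ⊕ l) R}
    (hA : A ∈ symplecticGroup l R) {S : (Matrix (l ⊕ l) (l ⊕ l) R)ˣ} {d : l ⊕ l → R}
    (hd : d.Injective) (hS : SemiconjBy S.val (diagonal d) A) (i : l ⊕ l) : d i * d i ≠ 1 := by
  -- the Gram matrix of the symplectic form in an eigenbasis of `A`
  let M := S.valᵀ * J l R * S.val
  have hdet : M.det ≠ 0 := by
    have hSdet := (isUnits_det_units S).ne_zero
    simp [M, hSdet, (isUnit_det_J l R).ne_zero]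
  have hM (j) : M j j = 0 := by
    rw [show M = S.valᵀ * (J l R * S.val) from Matrix.mul_assoc ..]
    exact dotProduct_J_mulVec_self (S.val.col j)
  refine mul_self_ne_one_of_diagonal_mul_mul_diagonal hd hdet hM ?_ i
  calc diagonal d * M * diagonal d
      = (S.val * diagonal d)ᵀ * J l R * (S.val * diagonal d) := by
        simp only [M, transpose_mul, diagonal_transpose, Matrix.mul_assoc]
    _ = S.valᵀ * (Aᵀ * J l R * A) * S.val := by
        rw [hS.eq, transpose_mul]
        simp only [Matrix.mul_assoc]
    _ = M := by rw [SymplecticGroup.mem_iff'.1 hA]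

lemma exists_isUnit_det_add_mul_symplecticAdjoint [Infinite K] {A B : Matrix (l ⊕ l) (l ⊕ l) K}
    (hA : A ∈ symplecticGroup l K) (hsep : A.charpoly.Separable) (hBA : Commute B A) :
    ∃ c : K, IsUnit ((c • 1 + A) + B * symplecticAdjoint (c • 1 + A)).det := by
  let f := algebraMap K (AlgebraicClosure K)
  obtain ⟨S, d, hd, hS⟩ := exists_semiconjBy_diagonal
    (separable_charpoly_mapMatrix hsep f) (IsAlgClosed.splits _)
  obtain ⟨b, hb⟩ := exists_semiconjBy_diagonal_of_commute hd hS (hBA.map f.mapMatrix)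
  obtain ⟨e, he⟩ := exists_semiconjBy_diagonal_of_commute hd hS
    ((commute_symplecticAdjoint hA (Commute.refl A)).map f.mapMatrix)
  have hde (i) : d i * e i = 1 := by
    have h := hS.mul_right he
    rw [← map_mul, mem_symplecticGroup_iff_mul_symplecticAdjoint.1 hA, map_one,
      diagonal_mul_diagonal] at h
    have hone := S.isUnit.mul_left_cancel (h.eq.trans ((one_mul _).trans (mul_one _).symm))
    simpa using congrFun₂ hone i i
  have hone : SemiconjBy S.val (diagonal fun _ ↦ 1) (f.mapMatrix 1) := by
    rw [map_one, diagonal_one]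
    exact SemiconjBy.one_right _
  have hM := hone.add_right hb
  have hN := hS.add_right (hb.mul_right he)
  rw [diagonal_add, ← map_add] at hM
  rw [diagonal_mul_diagonal, diagonal_add, ← map_mul, ← map_add] at hN
  have hdet : ∃ c : K, (c • (1 + B) + (A + B * symplecticAdjoint A)).det ≠ 0 := by
    refine exists_det_smul_add_ne_zero f hM hN fun i hbi hi ↦ ?_
    have hsq := mul_self_ne_one_of_mem_symplecticGroup (SymplecticGroup.map_mem hA f) hd hS i
    refine hsq ?_
    linear_combination d i * hi - d i * e i * hbi + hde i
  obtain ⟨c, hc⟩ := hdet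
  refine ⟨c, isUnit_iff_ne_zero.2 ?_⟩
  convert hc using 2
  rw [symplecticAdjoint_add, symplecticAdjoint_smul, symplecticAdjoint_one, Matrix.mul_add,
    mul_smul_comm, mul_one, smul_add]
  abel

lemma exists_symplecticQuotient_eq [Infinite K] {A B : Matrix (l ⊕ l) (l ⊕ l) K}
    (hA : A ∈ symplecticGroup l K) (hsep : A.charpoly.Separable)
    (hB : B ∈ symplecticGroup l K) (hBA : Commute B A) :
    ∃ Y, Commute Y A ∧ IsUnit Y.det ∧ symplecticQuotient Y = B := by
  obtain ⟨c, hc⟩ := exists_isUnit_det_add_mul_symplecticAdjoint hA hsep hBA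
  have hcA (X : Matrix (l ⊕ l) (l ⊕ l) K) (hXA : Commute X A) : Commute X (c • 1 + A) :=
    ((Commute.one_right X).smul_right c).add_right hXA
  have hZA := (hcA A (Commute.refl A)).symm
  exact ⟨_, hZA.add_left (hBA.mul_left (commute_symplecticAdjoint hA hZA)), hc,
    symplecticQuotient_add_mul_symplecticAdjoint hB (hcA B hBA) hc⟩

end Symplectic

section Density

lemma adjoin_subset_elemental_of_denseRange {F K M : Type*} [CommSemiring F] [CommSemiring K]
    [Algebra F K] [TopologicalSpace K] [Semiring M] [TopologicalSpace M] [IsTopologicalSemiring M]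
    [Algebra F M] [Algebra K M] [IsScalarTower F K M] [ContinuousSMul K M]
    (hFK : DenseRange (algebraMap F K)) (a : M) :
    (Algebra.adjoin K {a} : Set M) ⊆ Algebra.elemental F a := by
  intro x hx
  induction hx using Algebra.adjoin_induction with
  | mem x hx => exact hx ▸ Algebra.elemental.self_mem F a
  | algebraMap c =>
    refine map_mem_closure (continuous_algebraMap K M) (hFK c) ?_
    rintro - ⟨q, rfl⟩
    rw [← IsScalarTower.algebraMap_apply]
    exact Subalgebra.algebraMap_mem (Algebra.adjoin F {a}) q
  | add x y _ _ hx hy => exact add_mem hx hy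
  | mul x y _ _ hx hy => exact mul_mem hx hy

variable {n l F K : Type*} [Fintype n] [DecidableEq n] [Fintype l] [DecidableEq l] [Field F]
  [Field K] [Algebra F K] [TopologicalSpace K] [IsTopologicalDivisionRing K]

lemma mem_closure_map_adjoin_of_commute (hFK : DenseRange (algebraMap F K))
    {A : Matrix n n F} (hA : A.charpoly.Separable) {Y : Matrix n n K}
    (hY : Commute Y ((algebraMap F K).mapMatrix A)) :
    Y ∈ closure ((algebraMap F K).mapMatrix '' (Algebra.adjoin F {A} : Set (Matrix n n F))) := by
  have hadjoin : Y ∈ Algebra.adjoin K {(algebraMap F K).mapMatrix A} :=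
    mem_adjoin_of_commute (separable_charpoly_mapMatrix hA _) hY
  have hYA : Y ∈ Algebra.elemental F ((algebraMap F K).mapMatrix A) :=
    adjoin_subset_elemental_of_denseRange hFK _ hadjoin
  have hmap := congrArg SetLike.coe
    (AlgHom.map_adjoin_singleton (Algebra.ofId F K).mapMatrix A)
  rw [Subalgebra.coe_map] at hmap
  change Y ∈ closure ((Algebra.ofId F K).mapMatrix '' _)
  rw [hmap]
  exact hYA

lemma continuousAt_symplecticQuotient {Y : Matrix (l ⊕ l) (l ⊕ l) K} (hY : IsUnit Y.det) :
    ContinuousAt symplecticQuotient Y := by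
  have hadjoint : Continuous (symplecticAdjoint : Matrix (l ⊕ l) (l ⊕ l) K → _) := by
    unfold symplecticAdjoint
    fun_prop
  refine continuousAt_id.mul (ContinuousAt.comp (g := Inv.inv) ?_ hadjoint.continuousAt)
  refine continuousAt_matrix_inv _ ?_
  rw [Ring.inverse_eq_inv']
  exact continuousAt_inv₀ (isUnit_det_symplecticAdjoint hY).ne_zero

theorem rational_points_dense_in_symplectic_centralizer_general [T1Space K] [Infinite K]
    (hFK : DenseRange (algebraMap F K)) {A : Matrix (l ⊕ l) (l ⊕ l) F}
    (hAsp : A ∈ symplecticGroup l F) (hA : A.charpoly.Separable) :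
    Dense (X := {B : symplecticGroup l K //
        (B : Matrix (l ⊕ l) (l ⊕ l) K) * A.map (algebraMap F K)
          = A.map (algebraMap F K) * (B : Matrix (l ⊕ l) (l ⊕ l) K)})
      {B | ∀ i j, ((B : symplecticGroup l K) : Matrix (l ⊕ l) (l ⊕ l) K) i j ∈
        Set.range (algebraMap F K)} := by
  refine (Topology.IsInducing.subtypeVal.comp Topology.IsInducing.subtypeVal).dense_iff.2 ?_
  rintro ⟨⟨B, hB⟩, hBA⟩
  obtain ⟨Y, hYA, hY, rfl⟩ := exists_symplecticQuotient_eq (SymplecticGroup.map_mem hAsp _)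
    (separable_charpoly_mapMatrix hA (algebraMap F K)) hB hBA
  have hopen : IsOpen {Z : Matrix (l ⊕ l) (l ⊕ l) K | Z.det ≠ 0} :=
    isOpen_ne.preimage continuous_id.matrix_det
  have hclosure := hopen.inter_closure
    ⟨hY.ne_zero, mem_closure_map_adjoin_of_commute hFK hA hYA⟩
  have himage := mem_closure_image (continuousAt_symplecticQuotient hY) hclosure
  refine closure_mono ?_ himage
  rintro - ⟨-, ⟨hdet, Z, hZ, rfl⟩, rfl⟩
  have hZdet : IsUnit Z.det :=
    isUnit_iff_ne_zero.2 fun h ↦ hdet (by rw [← RingHom.map_det, h, map_zero])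
  have hZA : Commute Z A := (Algebra.commute_of_mem_adjoin_self hZ).symm
  have hσZ := Algebra.commute_of_mem_adjoin_singleton_of_commute hZ
    (commute_symplecticAdjoint hAsp hZA)
  have hsp := symplecticQuotient_mem_symplecticGroup hZdet hσZ
  have hcomm := (commute_symplecticQuotient hAsp hZdet hZA).map (algebraMap F K).mapMatrix
  exact ⟨⟨⟨_, SymplecticGroup.map_mem hsp (algebraMap F K)⟩, hcomm⟩,
    fun i j ↦ ⟨_, rfl⟩, map_symplecticQuotient _ hZdet⟩

end Density

/-- If `A ∈ Sp(2k,ℚ)` has `2k` distinct complex eigenvalues, then the set of rational points of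
the centralizer of (the entrywise real image of) `A` in `Sp(2k,ℝ)` is dense in that
centralizer. -/
theorem rational_points_dense_in_symplectic_centralizer (k : ℕ)
    (A : Matrix (Fin k ⊕ Fin k) (Fin k ⊕ Fin k) ℚ)
    (hAsp : A ∈ Matrix.symplecticGroup (Fin k) ℚ)
    (hA : ((A.map ((↑) : ℚ → ℂ)).charpoly.roots).toFinset.card = 2 * k) :
    Dense (X := {B : Matrix.symplecticGroup (Fin k) ℝ //
        (B : Matrix (Fin k ⊕ Fin k) (Fin k ⊕ Fin k) ℝ) * A.map ((↑) : ℚ → ℝ)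
          = A.map ((↑) : ℚ → ℝ) * (B : Matrix (Fin k ⊕ Fin k) (Fin k ⊕ Fin k) ℝ)})
      {B | ∀ i j,
        ((B : Matrix.symplecticGroup (Fin k) ℝ) : Matrix (Fin k ⊕ Fin k) (Fin k ⊕ Fin k) ℝ) i j ∈
          Set.range ((↑) : ℚ → ℝ)} :=
  rational_points_dense_in_symplectic_centralizer_general Rat.denseRange_cast hAsp <|
    separable_charpoly_of_card_toFinset_roots (n := Fin k ⊕ Fin k) (Rat.castHom ℂ)
      (hA.trans (by simp [two_mul]))
end

section
/- The centralizer of a regular semisimple element of SL(n,ℂ) is connected: if A ∈ SL(n,ℂ) has n distinct eigenvalues (its characteristic polynomial has n pairwise distinct roots in ℂ), then the centralizer {B ∈ SL(n,ℂ) : B * A = A * B}, with the subspace topology from the space of n×n complex matrices, is a connected topological space. -/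
/-!
If `P` conjugates a diagonal matrix with distinct entries to `A`, the matrices commuting with `A`
are the conjugates by `P` of diagonal matrices. Hence the centralizer of `A` in `SL` is homeomorphic
to the torus of tuples with product `1`, which is the image of the vector space of tuples with
sum `0` under the coordinatewise exponential.
-/

open Matrix Module Module.End

section Diagonalization

variable {ι K : Type*} [Fintype ι] [DecidableEq ι] [Field K] {A : Matrix ι ι K}

theorem isConj_diagonal_of_hasEigenvector {d : ι → K} (hd : Function.Injective d) {v : ι → ι → K}
    (hv : ∀ i, HasEigenvector (toLin' A) (d i) (v i)) : IsConj (diagonal d) A := by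
  have hunit : IsUnit (of v)ᵀ :=
    linearIndependent_cols_iff_isUnit.mp (eigenvectors_linearIndependent' _ d hd v hv)
  refine ⟨hunit.unit, ?_⟩
  ext i j
  have hij : (A *ᵥ v j) i = d j * v j i := congrFun (hv j).apply_eq_smul i
  rw [IsUnit.unit_spec, mul_diagonal, transpose_apply, of_apply, mul_comm]
  exact hij.symm

theorem exists_injective_isConj_diagonal_of_card_roots_charpoly [DecidableEq K]
    (hA : A.charpoly.roots.toFinset.card = Fintype.card ι) :
    ∃ d : ι → K, Function.Injective d ∧ IsConj (diagonal d) A := by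
  let e : ι ≃ A.charpoly.roots.toFinset := Fintype.equivOfCardEq (by simp [hA])
  have heigen (i : ι) : HasEigenvalue (toLin' A) (e i : K) := by
    rw [hasEigenvalue_iff_isRoot_charpoly, charpoly_toLin']
    exact Polynomial.isRoot_of_mem_roots (Multiset.mem_toFinset.mp (e i).2)
  choose v hv using fun i => (heigen i).exists_hasEigenvector
  have he : Function.Injective fun i => (e i : K) := Subtype.val_injective.comp e.injective
  exact ⟨_, he, isConj_diagonal_of_hasEigenvector he hv⟩

end Diagonalization

section Centralizer

variable {ι R : Type*} [Fintype ι] [DecidableEq ι] [CommRing R] [NoZeroDivisors R]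

theorem isDiag_of_commute_diagonal {d : ι → R} (hd : Function.Injective d) {M : Matrix ι ι R}
    (hM : Commute M (diagonal d)) : M.IsDiag := by
  intro i j hij
  have hentry : M i j * d j = d i * M i j := by
    simpa only [mul_diagonal, diagonal_mul] using congrFun₂ hM.eq i j
  have hprod : (d i - d j) * M i j = 0 := by linear_combination -hentry
  exact (mul_eq_zero.mp hprod).resolve_left (sub_ne_zero.mpr (hd.ne hij))

theorem setOf_det_eq_one_and_commute_eq_image {d : ι → R} (hd : Function.Injective d)
    {A : Matrix ι ι R} {P : (Matrix ι ι R)ˣ} (hP : SemiconjBy P.val (diagonal d) A) :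
    {M : Matrix ι ι R | M.det = 1 ∧ Commute M A} =
      (fun c => P.val * diagonal c * P⁻¹.val) '' {c : ι → R | ∏ i, c i = 1} := by
  have hPinv : SemiconjBy P⁻¹.val A (diagonal d) := hP.units_inv_symm_left
  ext M
  constructor
  · rintro ⟨hdet, hcomm⟩
    set N : Matrix ι ι R := P⁻¹.val * M * P.val with hN
    have hNd : Commute N (diagonal d) := (hPinv.mul_left hcomm).mul_left hP
    have hdiag : diagonal N.diag = N := (isDiag_of_commute_diagonal hd hNd).diagonal_diag
    refine ⟨N.diag, ?_, ?_⟩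
    · exact det_diagonal.symm.trans (by rw [hdiag, hN, det_units_conj', hdet])
    · simp only [hdiag]
      simp only [hN, mul_assoc, Units.mul_inv, mul_one, Units.mul_inv_cancel_left]
  · rintro ⟨c, hc, rfl⟩
    refine ⟨?_, (hP.mul_left (commute_diagonal c d)).mul_left hPinv⟩
    exact (det_units_conj P _).trans (det_diagonal.trans hc)

end Centralizer

section Torus

variable {ι : Type*} [Fintype ι]

theorem exists_sum_eq_zero_and_exp_eq {c : ι → ℂ} (hc : ∏ i, c i = 1) :
    ∃ x : ι → ℂ, ∑ i, x i = 0 ∧ ∀ i, Complex.exp (x i) = c i := by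
  classical
  rcases isEmpty_or_nonempty ι with _ | ⟨⟨i₀⟩⟩
  · exact ⟨0, by simp, isEmptyElim⟩
  have hne (i : ι) : c i ≠ 0 :=
    Finset.prod_ne_zero_iff.mp (hc ▸ one_ne_zero) i (Finset.mem_univ i)
  have hexp : Complex.exp (∑ i, Complex.log (c i)) = 1 := by
    simp only [Complex.exp_sum, Complex.exp_log (hne _), hc]
  -- The logarithms sum to an element of `2πiℤ`, which can be subtracted from a single coordinate.
  refine ⟨(fun i => Complex.log (c i)) - Pi.single i₀ (∑ i, Complex.log (c i)), ?_, fun i => ?_⟩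
  · simp [Finset.sum_sub_distrib]
  · rcases eq_or_ne i i₀ with rfl | hi
    · simp [Complex.exp_sub, Complex.exp_log (hne _), hexp]
    · simp [hi, Complex.exp_log (hne _)]

theorem isPathConnected_setOf_prod_eq_one : IsPathConnected {c : ι → ℂ | ∏ i, c i = 1} := by
  have hsum : IsPathConnected {x : ι → ℂ | ∑ i, x i = 0} := by
    have hlin : IsLinearMap ℝ fun x : ι → ℂ => ∑ i, x i :=
      ⟨by simp [Finset.sum_add_distrib], by simp [Finset.mul_sum]⟩
    exact ((convex_singleton 0).is_linear_preimage hlin).isPathConnected ⟨0, by simp⟩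
  have himage : {c : ι → ℂ | ∏ i, c i = 1} =
      (fun x i => Complex.exp (x i)) '' {x : ι → ℂ | ∑ i, x i = 0} := by
    ext c
    constructor
    · intro hc
      obtain ⟨x, hx, hexp⟩ := exists_sum_eq_zero_and_exp_eq hc
      exact ⟨x, hx, funext hexp⟩
    · rintro ⟨x, hx, rfl⟩
      rw [Set.mem_ofPred_eq, ← Complex.exp_sum, hx, Complex.exp_zero]
  rw [himage]
  exact hsum.image (by fun_prop)

end Torus

section SpecialLinearGroup

variable {ι : Type*} [Fintype ι] [DecidableEq ι]

theorem isPathConnected_setOf_det_eq_one_and_commute {A : Matrix ι ι ℂ} {d : ι → ℂ}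
    (hd : Function.Injective d) (hA : IsConj (diagonal d) A) :
    IsPathConnected {M : Matrix ι ι ℂ | M.det = 1 ∧ Commute M A} := by
  obtain ⟨P, hP⟩ := hA
  rw [setOf_det_eq_one_and_commute_eq_image hd hP]
  exact isPathConnected_setOf_prod_eq_one.image (by fun_prop)

theorem image_coe_setOf_commute {R : Type*} [CommRing R] (A : SpecialLinearGroup ι R) :
    (fun B : SpecialLinearGroup ι R => (B : Matrix ι ι R)) '' {B | B * A = A * B} =
      {M : Matrix ι ι R | M.det = 1 ∧ Commute M A} := by
  ext M
  constructor
  · rintro ⟨B, hB, rfl⟩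
    exact ⟨B.2, congrArg Subtype.val hB⟩
  · rintro ⟨hdet, hcomm⟩
    exact ⟨⟨M, hdet⟩, Subtype.ext hcomm, rfl⟩

theorem centralizer_connected_general (A : SpecialLinearGroup ι ℂ)
    (hA : (A : Matrix ι ι ℂ).charpoly.roots.toFinset.card = Fintype.card ι) :
    PathConnectedSpace {B : SpecialLinearGroup ι ℂ // B * A = A * B} := by
  obtain ⟨d, hd, hconj⟩ := exists_injective_isConj_diagonal_of_card_roots_charpoly hA
  have hcoe :
      Topology.IsInducing fun B : SpecialLinearGroup ι ℂ => (B : Matrix ι ι ℂ) := ⟨rfl⟩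
  have hpath : IsPathConnected {B : SpecialLinearGroup ι ℂ | B * A = A * B} := by
    rw [hcoe.isPathConnected_iff, image_coe_setOf_commute]
    exact isPathConnected_setOf_det_eq_one_and_commute hd hconj
  exact isPathConnected_iff_pathConnectedSpace.mp hpath

end SpecialLinearGroup

/-- The centralizer of a regular semisimple element of `SL(n,ℂ)` is connected. -/
theorem centralizer_connected (n : ℕ) (A : Matrix.SpecialLinearGroup (Fin n) ℂ)
    (hA : (((A : Matrix (Fin n) (Fin n) ℂ)).charpoly.roots).toFinset.card = n) :
    ConnectedSpace {B : Matrix.SpecialLinearGroup (Fin n) ℂ // B * A = A * B} := by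
  have := centralizer_connected_general A (hA.trans (Fintype.card_fin n).symm)
  infer_instance
end

section
/- The centralizer of a regular semisimple element of the complex symplectic group is connected: if A ∈ Sp(2k,ℂ) has 2k distinct eigenvalues (its characteristic polynomial has 2k pairwise distinct roots in ℂ), then the centralizer {B ∈ Sp(2k,ℂ) : B * A = A * B}, with the subspace topology from the space of 2k×2k complex matrices, is a connected topological space. -/
/-!
In an eigenbasis of `A` the form has a Gram matrix `M` with `d i * M i j * d j = M i j`, where `d`
lists the distinct eigenvalues. Hence `M i j ≠ 0` forces `d j = (d i)⁻¹`, so nondegeneracy leaves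
exactly one nonzero entry in each row; it pairs the eigenvectors by an involution `σ`, which has no
fixed point because the form is alternating. What commutes with `A` is diagonal in the eigenbasis,
and `diagonal c` preserves `M` if and only if `c i * c (σ i) = 1` for all `i`. The solutions form a
torus, the image of the connected set of vectors without zero entries under
`u ↦ fun i ↦ u i / u (σ i)`.
-/

open Matrix

section PairingTorus

variable {ι K : Type*}

/-- The vectors whose entries at `i` and `σ i` are mutually inverse. For a fixed-point-free
involution `σ` of a finite type it is the torus of coordinates of a centralizer in an eigenbasis. -/
def pairingTorus [Mul K] [One K] (σ : ι → ι) : Set (ι → K) :=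
  {c | ∀ i, c i * c (σ i) = 1}

lemma exists_set_apply_mem_iff_notMem {σ : ι → ι} (hσ : σ.Involutive) (hne : ∀ i, σ i ≠ i) :
    ∃ s : Set ι, ∀ i, σ i ∈ s ↔ i ∉ s := by
  obtain ⟨_, -⟩ := exists_wellFoundedLT ι
  refine ⟨{i | i < σ i}, fun i ↦ ?_⟩
  simp only [Set.mem_ofPred_eq, hσ i, not_lt]
  exact (hne i).le_iff_lt.symm

lemma pairingTorus_eq_image_div [Field K] {σ : ι → ι} (hσ : σ.Involutive) (hne : ∀ i, σ i ≠ i) :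
    pairingTorus σ =
      (fun (u : ι → K) i ↦ u i / u (σ i)) '' Set.univ.pi fun _ ↦ {0}ᶜ := by
  classical
  refine Set.Subset.antisymm (fun c hc ↦ ?_) ?_
  · obtain ⟨s, hs⟩ := exists_set_apply_mem_iff_notMem hσ hne
    refine ⟨s.piecewise c 1, fun i _ ↦ ?_, funext fun i ↦ ?_⟩
    · by_cases hi : i ∈ s <;> simp [hi, left_ne_zero_of_mul_eq_one (hc i)]
    · by_cases hi : i ∈ s
      · simp [hi, hs]
      · simp [hi, hs, eq_inv_of_mul_eq_one_left (hc i)]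
  · rintro _ ⟨u, hu, rfl⟩ i
    have hu₀ (j : ι) : u j ≠ 0 := hu j trivial
    simp only [hσ i]
    field_simp [hu₀]

lemma isConnected_pairingTorus [Field K] [TopologicalSpace K] [IsTopologicalDivisionRing K]
    (hK : IsConnected ({0}ᶜ : Set K)) {σ : ι → ι} (hσ : σ.Involutive) (hne : ∀ i, σ i ≠ i) :
    IsConnected (pairingTorus σ : Set (ι → K)) := by
  rw [pairingTorus_eq_image_div hσ hne]
  refine (isConnected_univ_pi.2 fun _ ↦ hK).image _ (continuousOn_pi.2 fun i ↦ ?_)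
  exact (continuous_apply i).continuousOn.div (continuous_apply (σ i)).continuousOn
    fun u hu ↦ hu (σ i) trivial

end PairingTorus

section IsometryCentralizer

variable {ι R K : Type*} [Fintype ι]

/-- The centralizer of `A` among the isometries of the bilinear form with Gram matrix `Ω`. It is
a set of matrices, so that its topology is that of the matrix space. -/
def isometryCentralizer [CommSemiring R] (Ω A : Matrix ι ι R) : Set (Matrix ι ι R) :=
  {B | Bᵀ * Ω * B = Ω ∧ Commute B A}

variable [DecidableEq ι]

lemma conj_mem_isometryCentralizer_iff [CommRing R] {Ω A E : Matrix ι ι R}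
    (P : (Matrix ι ι R)ˣ) :
    P.val * E * P⁻¹.val ∈ isometryCentralizer Ω (P.val * A * P⁻¹.val) ↔
      E ∈ isometryCentralizer (P.valᵀ * Ω * P.val) A := by
  set B := P.val * E * P⁻¹.val with hB
  have hBP : B * P.val = P.val * E := P.inv_mul_cancel_right (P.val * E)
  have hPT : IsUnit P.valᵀ := (isUnit_transpose _).2 P.isUnit
  refine and_congr ?_ ?_
  · have pullback : P.valᵀ * (Bᵀ * Ω * B) * P.val = Eᵀ * (P.valᵀ * Ω * P.val) * E := calc
      P.valᵀ * (Bᵀ * Ω * B) * P.val = (B * P.val)ᵀ * Ω * (B * P.val) := by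
        simp only [transpose_mul, Matrix.mul_assoc]
      _ = Eᵀ * (P.valᵀ * Ω * P.val) * E := by
        simp only [hBP, transpose_mul, Matrix.mul_assoc]
    rw [← pullback, P.isUnit.mul_left_inj, hPT.mul_right_inj]
  · have conj_mul (X Y : Matrix ι ι R) :
        P.val * X * P⁻¹.val * (P.val * Y * P⁻¹.val) = P.val * (X * Y) * P⁻¹.val := by
      simp only [Matrix.mul_assoc, P.inv_mul_cancel_left]
    rw [commute_iff_eq, hB, conj_mul, conj_mul, P⁻¹.isUnit.mul_left_inj, P.isUnit.mul_right_inj,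
      commute_iff_eq]

lemma isometryCentralizer_conj [CommRing R] (Ω A : Matrix ι ι R) (P : (Matrix ι ι R)ˣ) :
    isometryCentralizer Ω (P.val * A * P⁻¹.val) =
      (fun E ↦ P.val * E * P⁻¹.val) '' isometryCentralizer (P.valᵀ * Ω * P.val) A := by
  ext B
  refine ⟨fun hB ↦ ⟨P⁻¹.val * B * P.val, ?_, ?_⟩, ?_⟩
  · rw [← conj_mem_isometryCentralizer_iff]
    simpa [Matrix.mul_assoc] using hB
  · simp [Matrix.mul_assoc]
  · rintro ⟨E, hE, rfl⟩
    exact (conj_mem_isometryCentralizer_iff P).2 hE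

lemma exists_eq_conj_diagonal_of_card_roots [Field K] [DecidableEq K] {A : Matrix ι ι K}
    (hA : A.charpoly.roots.toFinset.card = Fintype.card ι) :
    ∃ (P : (Matrix ι ι K)ˣ) (d : ι → K), d.Injective ∧
      A = P.val * diagonal d * P⁻¹.val := by
  let e : ι ≃ A.charpoly.roots.toFinset := Fintype.equivOfCardEq (by rw [Fintype.card_coe, hA])
  let d (i : ι) : K := e i
  have hd : d.Injective := Subtype.val_injective.comp e.injective
  have hasEigenvalue (i : ι) : Module.End.HasEigenvalue (toLin' A) (d i) := by
    rw [Module.End.hasEigenvalue_iff_isRoot_charpoly, charpoly_toLin']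
    exact Polynomial.isRoot_of_mem_roots (Multiset.mem_toFinset.1 (e i).2)
  choose v hv using fun i ↦ (hasEigenvalue i).exists_hasEigenvector
  have hv_unit : IsUnit (of v)ᵀ := (isUnit_transpose _).2 <| linearIndependent_rows_iff_isUnit.1 <|
    Module.End.eigenvectors_linearIndependent' _ d hd v hv
  have hAv : A * (of v)ᵀ = (of v)ᵀ * diagonal d := by
    ext i j
    rw [mul_diagonal]
    exact (congrFun (hv j).apply_eq_smul i).trans (mul_comm _ _)
  exact ⟨hv_unit.unit, d, hd, (Units.eq_mul_inv_iff_mul_eq _).2 hAv⟩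

lemma commute_diagonal_iff_isDiag [CommRing R] [NoZeroDivisors R] {d : ι → R}
    (hd : d.Injective) {E : Matrix ι ι R} :
    Commute E (diagonal d) ↔ E.IsDiag := by
  refine ⟨fun h i j hij ↦ ?_, fun h ↦ h.diagonal_diag ▸ commute_diagonal E.diag d⟩
  have h_entry : E i j * d j = d i * E i j := by
    simpa only [mul_diagonal, diagonal_mul] using congr_fun₂ h.eq i j
  have h_mul : (d j - d i) * E i j = 0 := by linear_combination h_entry
  exact (mul_eq_zero.1 h_mul).resolve_left (sub_ne_zero.2 (hd.ne hij.symm))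

lemma diagonal_transpose_mul_mul_diagonal_eq_iff [CommSemiring R] [IsCancelMulZero R]
    {M : Matrix ι ι R} {c : ι → R} :
    (diagonal c)ᵀ * M * diagonal c = M ↔ ∀ i j, M i j ≠ 0 → c i * c j = 1 := by
  simp only [← Matrix.ext_iff, diagonal_transpose, mul_diagonal, diagonal_mul]
  refine forall₂_congr fun i j ↦ ?_
  rw [mul_right_comm, mul_left_eq_self₀, or_iff_not_imp_right]

lemma exists_ne_zero_iff_eq_of_diagonal_isometry [Field K] {M : Matrix ι ι K} (hM : IsUnit M)
    {d : ι → K} (hd : d.Injective) (hdM : (diagonal d)ᵀ * M * diagonal d = M) :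
    ∃ σ : ι → ι, ∀ i j, M i j ≠ 0 ↔ j = σ i := by
  rw [diagonal_transpose_mul_mul_diagonal_eq_iff] at hdM
  choose σ hσ using fun i ↦
    Function.ne_iff.1 ((linearIndependent_rows_iff_isUnit.2 hM).ne_zero i)
  refine ⟨σ, fun i j ↦ ⟨fun hij ↦ hd ?_, fun h ↦ h ▸ hσ i⟩⟩
  exact (eq_inv_of_mul_eq_one_right (hdM i j hij)).trans
    (eq_inv_of_mul_eq_one_right (hdM i (σ i) (hσ i))).symm

lemma isometryCentralizer_diagonal [CommRing R] [NoZeroDivisors R] {M : Matrix ι ι R}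
    {σ : ι → ι} (hσ : ∀ i j, M i j ≠ 0 ↔ j = σ i) {d : ι → R} (hd : d.Injective) :
    isometryCentralizer M (diagonal d) = diagonal '' pairingTorus σ := by
  have mem_iff (c : ι → R) : (diagonal c)ᵀ * M * diagonal c = M ↔ c ∈ pairingTorus σ := by
    simp only [diagonal_transpose_mul_mul_diagonal_eq_iff, hσ, forall_eq]
    rfl
  ext E
  constructor
  · rintro ⟨hEM, hE⟩
    have hE_diag := ((commute_diagonal_iff_isDiag hd).1 hE).diagonal_diag
    exact ⟨E.diag, (mem_iff E.diag).1 (hE_diag.symm ▸ hEM), hE_diag⟩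
  · rintro ⟨c, hc, rfl⟩
    exact ⟨(mem_iff c).2 hc, commute_diagonal c d⟩

lemma isAlt_toBilin'_congr [CommSemiring R] {Ω : Matrix ι ι R} (hΩ : (toBilin' Ω).IsAlt)
    (P : Matrix ι ι R) : (toBilin' (Pᵀ * Ω * P)).IsAlt := by
  rw [← toBilin'_comp]
  exact fun x ↦ hΩ (toLin' P x)

lemma involutive_of_isAlt_toBilin' [CommRing R] {M : Matrix ι ι R} (hM : (toBilin' M).IsAlt)
    {σ : ι → ι} (hσ : ∀ i j, M i j ≠ 0 ↔ j = σ i) : σ.Involutive := by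
  intro i
  have skew : -M i (σ i) = M (σ i) i := by
    simpa only [toBilin'_single] using hM.neg_eq (Pi.single i 1) (Pi.single (σ i) 1)
  refine ((hσ (σ i) i).1 ?_).symm
  rw [← skew]
  exact neg_ne_zero.2 ((hσ i (σ i)).2 rfl)

lemma apply_ne_self_of_isAlt_toBilin' [CommSemiring R] {M : Matrix ι ι R}
    (hM : (toBilin' M).IsAlt) {σ : ι → ι} (hσ : ∀ i j, M i j ≠ 0 ↔ j = σ i) (i : ι) : σ i ≠ i := by
  have diag_eq_zero : M i i = 0 := by simpa only [toBilin'_single] using hM (Pi.single i 1)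
  exact fun h ↦ (hσ i i).2 h.symm diag_eq_zero

lemma isConnected_isometryCentralizer_diagonal [Field K] [TopologicalSpace K]
    [IsTopologicalDivisionRing K] (hK : IsConnected ({0}ᶜ : Set K)) {M : Matrix ι ι K}
    (hM_alt : (toBilin' M).IsAlt) (hM : IsUnit M) {d : ι → K} (hd : d.Injective)
    (hdM : (diagonal d)ᵀ * M * diagonal d = M) :
    IsConnected (isometryCentralizer M (diagonal d)) := by
  obtain ⟨σ, hσ⟩ := exists_ne_zero_iff_eq_of_diagonal_isometry hM hd hdM
  rw [isometryCentralizer_diagonal hσ hd]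
  exact (isConnected_pairingTorus hK (involutive_of_isAlt_toBilin' hM_alt hσ)
    (apply_ne_self_of_isAlt_toBilin' hM_alt hσ)).image _ continuous_id.matrix_diagonal.continuousOn

theorem symplectic_centralizer_connected_general [Field K] [DecidableEq K] [TopologicalSpace K]
    [IsTopologicalDivisionRing K] (hK : IsConnected ({0}ᶜ : Set K)) {Ω A : Matrix ι ι K}
    (hΩ_alt : (toBilin' Ω).IsAlt) (hΩ : IsUnit Ω) (hAΩ : Aᵀ * Ω * A = Ω)
    (hA : A.charpoly.roots.toFinset.card = Fintype.card ι) :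
    IsConnected (isometryCentralizer Ω A) := by
  obtain ⟨P, d, hd, rfl⟩ := exists_eq_conj_diagonal_of_card_roots hA
  have hPT : IsUnit P.valᵀ := (isUnit_transpose _).2 P.isUnit
  have hd_isometry := ((conj_mem_isometryCentralizer_iff P).1 ⟨hAΩ, Commute.refl _⟩).1
  rw [isometryCentralizer_conj]
  refine (isConnected_isometryCentralizer_diagonal hK (isAlt_toBilin'_congr hΩ_alt P.val)
    ((hPT.mul hΩ).mul P.isUnit) hd hd_isometry).image _ (Continuous.continuousOn ?_)
  fun_prop

end IsometryCentralizer

section SymplecticGroup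

variable {l R : Type*} [Fintype l] [DecidableEq l] [CommRing R]

lemma isAlt_toBilin'_J : (toBilin' (J l R)).IsAlt := by
  intro x
  obtain ⟨u, v, rfl⟩ : ∃ u v, x = Sum.elim u v :=
    ⟨x ∘ Sum.inl, x ∘ Sum.inr, (Sum.elim_comp_inl_inr x).symm⟩
  rw [toBilin'_apply', J, fromBlocks_mulVec]
  simp [neg_mulVec, sumElim_dotProduct_sumElim, dotProduct_comm u v]

lemma range_coe_centralizer_symplecticGroup (A : symplecticGroup l R) :
    Set.range (fun B : {B : symplecticGroup l R // B * A = A * B} ↦ B.val.val) =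
      isometryCentralizer (J l R) A := by
  ext B
  constructor
  · rintro ⟨B, rfl⟩
    exact ⟨SymplecticGroup.mem_iff'.1 B.val.2, congrArg Subtype.val B.2⟩
  · rintro ⟨hBJ, hBA⟩
    exact ⟨⟨⟨B, SymplecticGroup.mem_iff'.2 hBJ⟩, Subtype.ext hBA⟩, rfl⟩

lemma connectedSpace_centralizer_symplecticGroup_iff [TopologicalSpace R]
    {A : symplecticGroup l R} :
    ConnectedSpace {B : symplecticGroup l R // B * A = A * B} ↔
      IsConnected (isometryCentralizer (J l R) A.val) := by
  have isInducing := Topology.IsInducing.subtypeVal.comp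
    (Topology.IsInducing.subtypeVal (t := fun B : symplecticGroup l R ↦ B * A = A * B))
  rw [← range_coe_centralizer_symplecticGroup, connectedSpace_iff_univ, ← Set.image_univ]
  exact (Set.image_nonempty.and isInducing.isPreconnected_image).symm

end SymplecticGroup

/-- The centralizer of a regular semisimple element of the complex symplectic group
`Sp(2k,ℂ)` is connected. -/
theorem symplectic_centralizer_connected (k : ℕ) (A : Matrix.symplecticGroup (Fin k) ℂ)
    (hA : (((A : Matrix (Fin k ⊕ Fin k) (Fin k ⊕ Fin k) ℂ)).charpoly.roots).toFinset.card
        = 2 * k) :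
    ConnectedSpace {B : Matrix.symplecticGroup (Fin k) ℂ // B * A = A * B} :=
  connectedSpace_centralizer_symplecticGroup_iff.2 <|
    symplectic_centralizer_connected_general
      (isConnected_compl_singleton_of_one_lt_rank (by simp) 0) isAlt_toBilin'_J
      ((isUnit_iff_isUnit_det _).2 (isUnit_det_J (Fin k) ℂ)) (SymplecticGroup.mem_iff'.1 A.2)
      (by simpa [two_mul] using hA)
end

section
/- The group Γ = ⟨a, b | (aba⁻¹b⁻¹)²⟩ contains a genus-2 surface subgroup of index 4: letting Γ be the presented group with generators a, b and single relator (a*b*a⁻¹*b⁻¹)², there exists a subgroup H of Γ with index 4 such that H is isomorphic to the genus-2 surface group Σ₂. -/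
/-- The single relator `(a * b * a⁻¹ * b⁻¹)^2` in the free group on two generators. -/
def magnusRelator : FreeGroup (Fin 2) :=
  (FreeGroup.of 0 * FreeGroup.of 1 * (FreeGroup.of 0)⁻¹ * (FreeGroup.of 1)⁻¹) ^ 2

/-- The group `Γ = ⟨a, b ∣ (aba⁻¹b⁻¹)²⟩`. -/
abbrev MagnusGroup : Type := PresentedGroup ({magnusRelator} : Set (FreeGroup (Fin 2)))

/-- The surface relator `[a₁,b₁] ⋯ [a_g,b_g]` in the free group on `a₁,b₁,…,a_g,b_g`. -/
def surfaceRelator (g : ℕ) : FreeGroup (Fin g ⊕ Fin g) :=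
  (List.ofFn fun i : Fin g =>
    FreeGroup.of (Sum.inl i) * FreeGroup.of (Sum.inr i) *
      (FreeGroup.of (Sum.inl i))⁻¹ * (FreeGroup.of (Sum.inr i))⁻¹).prod

/-- The genus-`g` surface group `Σ_g = ⟨a₁,b₁,…,a_g,b_g ∣ [a₁,b₁]⋯[a_g,b_g]⟩`. -/
abbrev SurfaceGroup (g : ℕ) : Type :=
  PresentedGroup ({surfaceRelator g} : Set (FreeGroup (Fin g ⊕ Fin g)))

/-!
Let `Γ` permute the four vertices of the path `0 -a- 1 -b- 2 -a- 3` (with `b` fixing `0` and `3`),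
so that `[a, b]` acts as the free involution `i ↦ 3 - i`. Labelling each edge of this graph by an
element of `Σ₂` lifts the action to `Fin 4 × Σ₂`, and `[a, b]² = 1` then amounts to the single
surface relation. Spelling the edges at the base vertex as loops gives a homomorphism `Σ₂ → Γ`; the
lifted action is `Γ` acting on itself by left translation, split into cosets of the image, so the
homomorphism is injective and its image has index `4`.
-/

open Equiv Function
open scoped commutatorElement

section SchreierCovering

variable {G K ι α : Type*} [Group G] [Group K]

/-- The permutation `(i, x) ↦ (σ i, c i * x)` of `ι × K`, the analogue of a monomial matrix with
entries in the group `K`. These permutations form the wreath product of `K` and `Perm ι`. -/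
def monomialPerm (σ : Perm ι) (c : ι → K) : Perm (ι × K) :=
  prodShear σ fun i => Equiv.mulLeft (c i)

@[simp]
theorem monomialPerm_apply (σ : Perm ι) (c : ι → K) (i : ι) (x : K) :
    monomialPerm σ c (i, x) = (σ i, c i * x) :=
  rfl

theorem monomialPerm_mul (σ τ : Perm ι) (c d : ι → K) :
    monomialPerm σ c * monomialPerm τ d = monomialPerm (σ * τ) fun i => c (τ i) * d i := by
  ext1 ⟨i, x⟩
  simp [mul_assoc]

theorem monomialPerm_one : monomialPerm (1 : Perm ι) (1 : ι → K) = 1 := by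
  ext1 ⟨i, x⟩
  simp

/-- The parametrization of `G` by pairs `(i, x)`, where `t` is thought of as a left transversal of
the image of `φ`. -/
def cosetMap (t : ι → G) (φ : K →* G) (z : ι × K) : G :=
  t z.1 * φ z.2

theorem injective_of_cosetMap_injective [Nonempty ι] {t : ι → G} {φ : K →* G}
    (h : Injective (cosetMap t φ)) : Injective φ := by
  intro x y hxy
  obtain ⟨i⟩ := ‹Nonempty ι›
  have : (i, x) = (i, y) := h (congrArg (t i * ·) hxy)
  exact congrArg Prod.snd this

theorem index_range_of_cosetMap_bijective {t : ι → G} {φ : K →* G}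
    (h : Bijective (cosetMap t φ)) : φ.range.index = Nat.card ι := by
  have mk_bijective : Bijective fun i => (t i : G ⧸ φ.range) := by
    constructor
    · intro i j hij
      obtain ⟨x, hx⟩ := QuotientGroup.eq.1 hij
      have : (i, x) = (j, 1) := h.1 (by simp [cosetMap, hx])
      exact congrArg Prod.fst this
    · intro q
      obtain ⟨g, rfl⟩ := QuotientGroup.mk_surjective q
      obtain ⟨⟨i, x⟩, rfl⟩ := h.2 g
      exact ⟨i, QuotientGroup.eq.2 ⟨x, by simp [cosetMap]⟩⟩
  exact (Nat.card_congr (Equiv.ofBijective _ mk_bijective)).symm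

theorem semiconj_of_closure_eq_top {X Y : Type*} {s : Set G} (hs : Subgroup.closure s = ⊤)
    (ρ : G →* Perm X) (τ : G →* Perm Y) (f : X → Y) (h : ∀ g ∈ s, Semiconj f (ρ g) (τ g)) (g : G) :
    Semiconj f (ρ g) (τ g) := by
  have hg : g ∈ Subgroup.closure s := hs ▸ Subgroup.mem_top g
  induction hg using Subgroup.closure_induction with
  | mem g hg => exact h g hg
  | one => simp [Semiconj]
  | mul g₁ g₂ _ _ h₁ h₂ => simpa using h₁.comp_right h₂
  | inv g _ hg =>
    simpa using hg.inverses_right (ρ g).right_inv (τ g).left_inv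

variable {s : α → G} {σ : α → Perm ι} {c : α → ι → K} {t : ι → G} {φ : K →* G}
  {ρ : G →* Perm (ι × K)} {i₀ : ι}

theorem cosetMap_semiconj (hs : Subgroup.closure (Set.range s) = ⊤)
    (hρ : ∀ j, ρ (s j) = monomialPerm (σ j) (c j))
    (hφ : ∀ j i, s j * t i = t (σ j i) * φ (c j i)) (g : G) :
    Semiconj (cosetMap t φ) (ρ g) (g * ·) := by
  refine semiconj_of_closure_eq_top hs ρ (MulAction.toPermHom G G) (cosetMap t φ) ?_ g
  rintro _ ⟨j, rfl⟩ ⟨i, x⟩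
  calc cosetMap t φ (ρ (s j) (i, x)) = t (σ j i) * φ (c j i) * φ x := by
        simp [hρ, cosetMap, mul_assoc]
    _ = s j * cosetMap t φ (i, x) := by rw [← hφ, mul_assoc, cosetMap]

theorem lifted_action_on_base_fibre (hρ : ∀ j, ρ (s j) = monomialPerm (σ j) (c j))
    (hφ : ∀ j i, s j * t i = t (σ j i) * φ (c j i))
    (ht : ∀ i x, ρ (t i) (i₀, x) = (i, x))
    (hc : Subgroup.closure (Set.range (uncurry c)) = ⊤) (k x : K) :
    ρ (φ k) (i₀, x) = (i₀, k * x) := by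
  refine (semiconj_of_closure_eq_top hc (MulAction.toPermHom K K) (ρ.comp φ) (Prod.mk i₀) ?_
    k x).symm
  rintro _ ⟨⟨j, i⟩, rfl⟩ y
  apply (ρ (t (σ j i))).injective
  calc ρ (t (σ j i)) (i₀, c j i * y) = ρ (s j) (ρ (t i) (i₀, y)) := by simp [ht, hρ]
    _ = ρ (t (σ j i)) (ρ (φ (c j i)) (i₀, y)) := by
        rw [← Perm.mul_apply, ← map_mul, hφ, map_mul, Perm.mul_apply]

theorem cosetMap_bijective (hs : Subgroup.closure (Set.range s) = ⊤)
    (hρ : ∀ j, ρ (s j) = monomialPerm (σ j) (c j))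
    (hφ : ∀ j i, s j * t i = t (σ j i) * φ (c j i))
    (ht : ∀ i x, ρ (t i) (i₀, x) = (i, x))
    (hc : Subgroup.closure (Set.range (uncurry c)) = ⊤) :
    Bijective (cosetMap t φ) := by
  constructor
  · have orbit_map : LeftInverse (fun g => ρ g (i₀, 1)) (cosetMap t φ) := by
      rintro ⟨i, x⟩
      simp [cosetMap, lifted_action_on_base_fibre hρ hφ ht hc, ht]
    exact orbit_map.injective
  · intro g
    let g₀ := cosetMap t φ (i₀, 1)
    refine ⟨ρ (g * g₀⁻¹) (i₀, 1), ?_⟩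
    rw [cosetMap_semiconj hs hρ hφ]
    exact inv_mul_cancel_right g g₀

end SchreierCovering

namespace SurfaceGroup

variable {G : Type*} [Group G] {g : ℕ}

/-- The generator `aᵢ` of the genus-`g` surface group. -/
def x (i : Fin g) : SurfaceGroup g :=
  PresentedGroup.of (Sum.inl i)

/-- The generator `bᵢ` of the genus-`g` surface group. -/
def y (i : Fin g) : SurfaceGroup g :=
  PresentedGroup.of (Sum.inr i)

theorem map_surfaceRelator (f : FreeGroup (Fin g ⊕ Fin g) →* G) :
    f (surfaceRelator g) =
      (List.ofFn fun i => ⁅f (FreeGroup.of (Sum.inl i)), f (FreeGroup.of (Sum.inr i))⁆).prod := by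
  simp [surfaceRelator, map_list_prod, List.map_ofFn, comp_def, commutatorElement_def]

theorem prod_commutator_eq_one : (List.ofFn fun i : Fin g => ⁅x i, y i⁆).prod = 1 :=
  (map_surfaceRelator (PresentedGroup.mk {surfaceRelator g})).symm.trans
    (PresentedGroup.one_of_mem (Set.mem_singleton _))

/-- The universal property of the surface group. -/
def lift (u v : Fin g → G) (h : (List.ofFn fun i => ⁅u i, v i⁆).prod = 1) : SurfaceGroup g →* G :=
  PresentedGroup.toGroup (f := Sum.elim u v) <| by
    rintro _ rfl
    simpa [map_surfaceRelator] using h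

variable {u v : Fin g → G} {h : (List.ofFn fun i => ⁅u i, v i⁆).prod = 1}

@[simp]
theorem lift_x (i : Fin g) : lift u v h (x i) = u i :=
  PresentedGroup.toGroup.of _

@[simp]
theorem lift_y (i : Fin g) : lift u v h (y i) = v i :=
  PresentedGroup.toGroup.of _

theorem eq_top_of_generators_mem {H : Subgroup (SurfaceGroup g)} (hx : ∀ i, x i ∈ H)
    (hy : ∀ i, y i ∈ H) : H = ⊤ := by
  rw [eq_top_iff, ← PresentedGroup.closure_range_of, Subgroup.closure_le]
  rintro _ ⟨i | i, rfl⟩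
  exacts [hx i, hy i]

end SurfaceGroup

namespace MagnusGroup

variable {G : Type*} [Group G]

/-- The generator `a` of `Γ`. -/
def a : MagnusGroup :=
  PresentedGroup.of 0

/-- The generator `b` of `Γ`. -/
def b : MagnusGroup :=
  PresentedGroup.of 1

theorem commutator_sq_eq_one : ⁅a, b⁆ ^ 2 = 1 :=
  PresentedGroup.one_of_mem (rels := {magnusRelator}) (Set.mem_singleton _)

theorem closure_range_generators : Subgroup.closure (Set.range ![a, b]) = ⊤ := by
  have : ![a, b] = PresentedGroup.of := by
    funext j
    fin_cases j <;> rfl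
  rw [this, PresentedGroup.closure_range_of]

/-- The universal property of `Γ`. -/
def lift (u v : G) (h : ⁅u, v⁆ ^ 2 = 1) : MagnusGroup →* G :=
  PresentedGroup.toGroup (f := ![u, v]) <| by
    rintro _ rfl
    simpa [magnusRelator, commutatorElement_def] using h

variable {u v : G} {h : ⁅u, v⁆ ^ 2 = 1}

@[simp]
theorem lift_a : lift u v h a = u :=
  PresentedGroup.toGroup.of _

@[simp]
theorem lift_b : lift u v h b = v :=
  PresentedGroup.toGroup.of _

end MagnusGroup

section GenusTwoCovering

variable {G K : Type*} [Group G] [Group K]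

/-- The action of the generators `a`, `b` on the vertices of the path `0 -a- 1 -b- 2 -a- 3`. -/
def pathPerm : Fin 2 → Perm (Fin 4) :=
  ![swap 0 1 * swap 2 3, swap 1 2]

/-- The label of the edge leaving the vertex `i` along the generator `j`, for the graph described
by `pathPerm`. Three labels are trivial along a spanning tree; `(x 0)⁻¹ * y 1` is then forced by
`[a, b]² = 1` at the vertices `0` and `3`, and the surface relation is what remains at the other
two vertices. -/
def edgeLabel (x y : Fin 2 → K) : Fin 2 → Fin 4 → K :=
  ![![y 0, 1, 1, x 1], ![(x 0)⁻¹, 1, (x 0)⁻¹ * y 1, y 1]]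

/-- The permutations of `Fin 4 × K` by which `a` and `b` act on the covering with labels
`edgeLabel`. -/
def coveringPerm (x y : Fin 2 → K) (j : Fin 2) : Perm (Fin 4 × K) :=
  monomialPerm (pathPerm j) (edgeLabel x y j)

theorem commutator_coveringPerm (x y : Fin 2 → K) :
    ⁅coveringPerm x y 0, coveringPerm x y 1⁆ =
      monomialPerm Fin.revPerm
        ![x 0, ⁅x 1, y 1⁆ * x 0, y 0 * (x 0)⁻¹ * (y 0)⁻¹, (x 0)⁻¹] := by
  rw [commutatorElement_def, mul_inv_eq_iff_eq_mul, mul_inv_eq_iff_eq_mul]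
  simp only [coveringPerm, monomialPerm_mul]
  congr 1
  · decide
  · funext i
    fin_cases i <;> simp [pathPerm, edgeLabel, commutatorElement_def, swap_apply_def, mul_assoc]

theorem commutator_coveringPerm_sq {x y : Fin 2 → K} (h : ⁅x 0, y 0⁆ * ⁅x 1, y 1⁆ = 1) :
    ⁅coveringPerm x y 0, coveringPerm x y 1⁆ ^ 2 = 1 := by
  have label_of_loop_at_one : y 0 * (x 0)⁻¹ * (y 0)⁻¹ * (⁅x 1, y 1⁆ * x 0) = 1 := by
    calc _ = (x 0)⁻¹ * (⁅x 0, y 0⁆ * ⁅x 1, y 1⁆) * x 0 := by group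
      _ = 1 := by rw [h]; group
  rw [commutator_coveringPerm, sq, monomialPerm_mul, ← monomialPerm_one]
  congr 1
  · decide
  · funext i
    fin_cases i
    · exact inv_mul_cancel (x 0)
    · exact label_of_loop_at_one
    · exact mul_eq_one_comm.1 label_of_loop_at_one
    · exact mul_inv_cancel (x 0)

theorem map_edgeLabel (φ : K →* G) (x y : Fin 2 → K) (j : Fin 2) (i : Fin 4) :
    φ (edgeLabel x y j i) = edgeLabel (φ ∘ x) (φ ∘ y) j i := by
  fin_cases j <;> fin_cases i <;> simp [edgeLabel]

theorem closure_range_edgeLabel :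
    Subgroup.closure (Set.range (uncurry (edgeLabel SurfaceGroup.x (SurfaceGroup.y (g := 2))))) =
      ⊤ := by
  have label_mem (j : Fin 2) (i : Fin 4) := Subgroup.subset_closure
    (Set.mem_range_self (f := uncurry (edgeLabel SurfaceGroup.x SurfaceGroup.y)) (j, i))
  refine SurfaceGroup.eq_top_of_generators_mem (Fin.forall_fin_two.2 ⟨?_, label_mem 0 3⟩)
    (Fin.forall_fin_two.2 ⟨label_mem 0 0, label_mem 1 3⟩)
  exact inv_mem_iff.1 (label_mem 1 0)

/-- The elements spelled by paths from the vertex `0` with trivial labels: the edges labelled `1`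
are `a : 1 → 0`, `b : 1 → 2` and `a : 2 → 3`. -/
def vertexRep (a b : G) : Fin 4 → G :=
  ![1, a⁻¹, b * a⁻¹, a * b * a⁻¹]

/-- The images of the generators `a₁`, `a₂` of `Σ₂`: loops at the vertex `0`, read off the edges
labelled by these generators. -/
def loopX (a b : G) : Fin 2 → G :=
  ![b⁻¹, (b * a⁻¹)⁻¹ * a * (a * b * a⁻¹)]

/-- The images of the generators `b₁`, `b₂` of `Σ₂`, as in `loopX`. -/
def loopY (a b : G) : Fin 2 → G :=
  ![a ^ 2, (a * b * a⁻¹)⁻¹ * b * (a * b * a⁻¹)]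

theorem loop_relation {a b : G} (h : ⁅a, b⁆ ^ 2 = 1) :
    ⁅loopX a b 0, loopY a b 0⁆ * ⁅loopX a b 1, loopY a b 1⁆ = 1 := by
  calc _ = b⁻¹ * (a * ⁅a, b⁆ ^ 2 * a⁻¹) * ⁅a, b⁆ ^ 2 * b := by
        simp [loopX, loopY, commutatorElement_def, sq, mul_assoc]
    _ = 1 := by simp [h]

theorem generator_mul_vertexRep {a b : G} (h : ⁅a, b⁆ ^ 2 = 1) (j : Fin 2) (i : Fin 4) :
    ![a, b] j * vertexRep a b i =
      vertexRep a b (pathPerm j i) * edgeLabel (loopX a b) (loopY a b) j i := by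
  have commutator_inv : ⁅b, a⁆ = ⁅a, b⁆ := by
    rw [← commutatorElement_inv, inv_eq_iff_mul_eq_one, ← sq, h]
  have b_edge_two_one : b * (b * a⁻¹) = a⁻¹ * (b * loopY a b 1) := by
    calc b * (b * a⁻¹) = a⁻¹ * ⁅a, b⁆ * (b * a * b * a⁻¹) := by
          simp [commutatorElement_def, mul_assoc]
      _ = a⁻¹ * ⁅b, a⁆ * (b * a * b * a⁻¹) := by rw [commutator_inv]
      _ = a⁻¹ * (b * loopY a b 1) := by simp [loopY, commutatorElement_def, mul_assoc]
  fin_cases j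
  · fin_cases i <;>
      simp [pathPerm, vertexRep, edgeLabel, loopX, loopY, swap_apply_def, sq, mul_assoc]
  · fin_cases i
    on_goal 3 => simpa [pathPerm, vertexRep, edgeLabel, loopX] using b_edge_two_one
    all_goals simp [pathPerm, vertexRep, edgeLabel, loopX, loopY, swap_apply_def, mul_assoc]

theorem map_vertexRep (ρ : G →* K) (a b : G) (i : Fin 4) :
    ρ (vertexRep a b i) = vertexRep (ρ a) (ρ b) i := by
  fin_cases i <;> simp [vertexRep]

theorem vertexRep_coveringPerm (x y : Fin 2 → K) (i : Fin 4) (z : K) :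
    vertexRep (coveringPerm x y 0) (coveringPerm x y 1) i (0, z) = (i, z) := by
  have a_edge_one_zero : (coveringPerm x y 0).symm (0, z) = (1, z) := by
    rw [symm_apply_eq]
    simp [coveringPerm, pathPerm, edgeLabel, swap_apply_def]
  have b_edge_one_two : coveringPerm x y 1 (1, z) = (2, z) := by
    simp [coveringPerm, pathPerm, edgeLabel]
  have a_edge_two_three : coveringPerm x y 0 (2, z) = (3, z) := by
    simp [coveringPerm, pathPerm, edgeLabel, swap_apply_def]
  fin_cases i <;> simp [vertexRep, a_edge_one_zero, b_edge_one_two, a_edge_two_three]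

/-- The inclusion of `Σ₂` into `Γ` as the loops at the base vertex. -/
def coveringHom : SurfaceGroup 2 →* MagnusGroup :=
  SurfaceGroup.lift (loopX MagnusGroup.a MagnusGroup.b) (loopY MagnusGroup.a MagnusGroup.b) <| by
    simpa using loop_relation MagnusGroup.commutator_sq_eq_one

/-- The action of `Γ` on `Fin 4 × Σ₂`, which lifts its action on the vertices. -/
def coveringAction : MagnusGroup →* Perm (Fin 4 × SurfaceGroup 2) :=
  MagnusGroup.lift (coveringPerm SurfaceGroup.x SurfaceGroup.y 0)
    (coveringPerm SurfaceGroup.x SurfaceGroup.y 1) <|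
    commutator_coveringPerm_sq <| by simpa using SurfaceGroup.prod_commutator_eq_one (g := 2)

theorem cosetMap_coveringHom_bijective :
    Bijective (cosetMap (vertexRep MagnusGroup.a MagnusGroup.b) coveringHom) := by
  refine cosetMap_bijective (ρ := coveringAction) (σ := pathPerm)
    (c := edgeLabel SurfaceGroup.x SurfaceGroup.y) (i₀ := 0)
    MagnusGroup.closure_range_generators ?_ ?_ ?_ closure_range_edgeLabel
  · exact Fin.forall_fin_two.2 ⟨MagnusGroup.lift_a, MagnusGroup.lift_b⟩
  · intro j i
    have map_x : coveringHom ∘ SurfaceGroup.x = loopX MagnusGroup.a MagnusGroup.b :=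
      funext SurfaceGroup.lift_x
    have map_y : coveringHom ∘ SurfaceGroup.y = loopY MagnusGroup.a MagnusGroup.b :=
      funext SurfaceGroup.lift_y
    rw [map_edgeLabel, map_x, map_y, generator_mul_vertexRep MagnusGroup.commutator_sq_eq_one]
  · intro i z
    rw [map_vertexRep, coveringAction, MagnusGroup.lift_a, MagnusGroup.lift_b,
      vertexRep_coveringPerm]

end GenusTwoCovering

/-- `Γ = ⟨a, b ∣ (aba⁻¹b⁻¹)²⟩` contains an index-`4` subgroup isomorphic to the genus-`2`
surface group. -/
theorem magnus_group_contains_genus_two_surface_group :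
    ∃ H : Subgroup MagnusGroup, H.index = 4 ∧ Nonempty (H ≃* SurfaceGroup 2) :=
  ⟨coveringHom.range,
    (index_range_of_cosetMap_bijective cosetMap_coveringHom_bijective).trans (Nat.card_fin 4),
    ⟨(MonoidHom.ofInjective
      (injective_of_cosetMap_injective cosetMap_coveringHom_bijective.injective)).symm⟩⟩
end
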